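/- arXiv:1110.6187 — 9 statements merged into one kernel-verified Lean document; each statement's English description precedes it below -/
import Mathlib

section
/- Let E be a real Banach space, let {X_n}, {Y_n} be sequences of nonempty bounded subsets of E and X, Y nonempty bounded subsets of E such that X_n →F X and Y_n →F Y (Fisher convergence). Let {λ_n}, {μ_n} ⊂ [0,∞) with λ_n → λ and μ_n → μ for some λ, μ ≥ 0. Then the sequence of closures of λ_n X_n + μ_n Y_n Fisher-converges to the closure of λX + μY, where A + B denotes the Minkowski sum {a+b : a∈A, b∈B} and λA = {λa : a∈A}. -/
open Metric Filter Topology Pointwise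

variable {E : Type*} [NormedAddCommGroup E] [NormedSpace ℝ E] [CompleteSpace E]

/-- The excess `e(A,B) = sup_{a ∈ A} d(a, B)`. -/
noncomputable def excess (A B : Set E) : ℝ := sSup ((fun a => infDist a B) '' A)

/-- Fisher convergence: `e(Xₙ, L) → 0` and `d(z, Xₙ) → 0` for every `z ∈ L`. -/
def FisherConv (X : ℕ → Set E) (L : Set E) : Prop :=
  Tendsto (fun n => excess (X n) L) atTop (𝓝 0) ∧
    ∀ z ∈ L, Tendsto (fun n => infDist z (X n)) atTop (𝓝 0)

theorem aux_le_excess {S T : Set E} (hS : Bornology.IsBounded S) (hT : T.Nonempty) {x : E}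
    (hx : x ∈ S) : infDist x T ≤ excess S T := by
  obtain ⟨t, ht⟩ := hT
  obtain ⟨R, hR⟩ := hS.subset_closedBall t
  refine le_csSup ⟨R, ?_⟩ ⟨x, hx, rfl⟩
  rintro _ ⟨y, hy, rfl⟩
  exact (infDist_le_dist_of_mem ht).trans (hR hy)

theorem aux_norm {s s' : ℝ} (hs : 0 ≤ s) (x a : E) :
    ‖s • x - s' • a‖ ≤ s * dist x a + |s - s'| * ‖a‖ := by
  have h : s • x - s' • a = s • (x - a) + (s - s') • a := by module
  rw [h]
  refine (norm_add_le _ _).trans ?_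
  rw [norm_smul, norm_smul, Real.norm_eq_abs, Real.norm_eq_abs, abs_of_nonneg hs, dist_eq_norm]

theorem aux_infDist {P Q : Set E} (x y p q : E) (s t s' t' : ℝ) (hp : p ∈ P) (hq : q ∈ Q) :
    infDist (s • x + t • y) (s' • P + t' • Q) ≤ ‖s • x - s' • p‖ + ‖t • y - t' • q‖ := by
  refine (infDist_le_dist_of_mem
    (Set.add_mem_add (Set.smul_mem_smul_set hp) (Set.smul_mem_smul_set hq))).trans ?_
  rw [dist_eq_norm, add_sub_add_comm]
  exact norm_add_le _ _

theorem aux_tendsto {lam mu e f : ℕ → ℝ} {l m : ℝ} (R S : ℝ)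
    (hlaml : Tendsto lam atTop (𝓝 l)) (hmum : Tendsto mu atTop (𝓝 m))
    (he : Tendsto e atTop (𝓝 0)) (hf : Tendsto f atTop (𝓝 0)) :
    Tendsto (fun n : ℕ => (lam n * (e n + 1 / ((n : ℝ) + 1)) + |lam n - l| * R) +
      (mu n * (f n + 1 / ((n : ℝ) + 1)) + |mu n - m| * S)) atTop (𝓝 0) := by
  have hd : Tendsto (fun n : ℕ => 1 / ((n : ℝ) + 1)) atTop (𝓝 0) :=
    tendsto_one_div_add_atTop_nhds_zero_nat
  have h := ((hlaml.mul (he.add hd)).add (((hlaml.sub_const l).abs).mul_const R)).add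
    ((hmum.mul (hf.add hd)).add (((hmum.sub_const m).abs).mul_const S))
  simpa using h

/-- Proposition 3.3: if `Xₙ →F A`, `Yₙ →F B` (Fisher) for nonempty bounded sets, and
`λₙ → λ`, `μₙ → μ` with all scalars nonnegative, then the closures of `λₙXₙ + μₙYₙ`
Fisher-converge to the closure of `λA + μB`. -/
theorem fisherConv_smul_add (X Y : ℕ → Set E) (A B : Set E)
    (hXne : ∀ n, (X n).Nonempty) (hXbd : ∀ n, Bornology.IsBounded (X n))
    (hYne : ∀ n, (Y n).Nonempty) (hYbd : ∀ n, Bornology.IsBounded (Y n))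
    (hAne : A.Nonempty) (hAbd : Bornology.IsBounded A)
    (hBne : B.Nonempty) (hBbd : Bornology.IsBounded B)
    (hXF : FisherConv X A) (hYF : FisherConv Y B)
    (lam mu : ℕ → ℝ) (l m : ℝ)
    (hlam0 : ∀ n, 0 ≤ lam n) (hmu0 : ∀ n, 0 ≤ mu n) (hl0 : 0 ≤ l) (hm0 : 0 ≤ m)
    (hlaml : Tendsto lam atTop (𝓝 l)) (hmum : Tendsto mu atTop (𝓝 m)) :
    FisherConv (fun n => closure (lam n • X n + mu n • Y n)) (closure (l • A + m • B)) := by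
  have hd : ∀ n : ℕ, 0 < 1 / ((n : ℝ) + 1) := fun n => by positivity
  constructor
  · obtain ⟨R, hR⟩ := hAbd.exists_norm_le
    obtain ⟨S, hS⟩ := hBbd.exists_norm_le
    refine squeeze_zero (fun n => ?_) (fun n => ?_)
      (aux_tendsto R S hlaml hmum hXF.1 hYF.1)
    · apply Real.sSup_nonneg
      rintro _ ⟨y, -, rfl⟩
      exact infDist_nonneg
    · refine csSup_le
        ((((hXne n).smul_set).add ((hYne n).smul_set)).closure.image _) ?_
      rintro _ ⟨z, hz, rfl⟩
      simp only [infDist_closure]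
      refine closure_minimal (t := {z | infDist z (l • A + m • B) ≤ _}) ?_
        (isClosed_le (continuous_infDist_pt _) continuous_const) hz
      rintro _ ⟨_, ⟨x, hx, rfl⟩, _, ⟨y, hy, rfl⟩, rfl⟩
      obtain ⟨a, ha, hxa⟩ := (infDist_lt_iff hAne).1
        ((aux_le_excess (hXbd n) hAne hx).trans_lt (lt_add_of_pos_right _ (hd n)))
      obtain ⟨b, hb, hyb⟩ := (infDist_lt_iff hBne).1
        ((aux_le_excess (hYbd n) hBne hy).trans_lt (lt_add_of_pos_right _ (hd n)))
      refine (aux_infDist x y a b _ _ _ _ ha hb).trans (add_le_add ?_ ?_)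
      · refine (aux_norm (hlam0 n) _ _).trans (add_le_add ?_ ?_)
        · exact mul_le_mul_of_nonneg_left hxa.le (hlam0 n)
        · exact mul_le_mul_of_nonneg_left (hR a ha) (abs_nonneg _)
      · refine (aux_norm (hmu0 n) _ _).trans (add_le_add ?_ ?_)
        · exact mul_le_mul_of_nonneg_left hyb.le (hmu0 n)
        · exact mul_le_mul_of_nonneg_left (hS b hb) (abs_nonneg _)
  · intro z hz
    simp only [infDist_closure]
    have key : ∀ w ∈ l • A + m • B,
        Tendsto (fun n => infDist w (lam n • X n + mu n • Y n)) atTop (𝓝 0) := by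
      rintro _ ⟨_, ⟨a, ha, rfl⟩, _, ⟨b, hb, rfl⟩, rfl⟩
      refine squeeze_zero (fun n => infDist_nonneg) (fun n => ?_)
        (aux_tendsto ‖a‖ ‖b‖ hlaml hmum (hXF.2 a ha) (hYF.2 b hb))
      obtain ⟨x, hx, hax⟩ := (infDist_lt_iff (hXne n)).1
        (lt_add_of_pos_right (infDist a (X n)) (hd n))
      obtain ⟨y, hy, hby⟩ := (infDist_lt_iff (hYne n)).1
        (lt_add_of_pos_right (infDist b (Y n)) (hd n))
      refine (aux_infDist a b x y _ _ _ _ hx hy).trans (add_le_add ?_ ?_)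
      · rw [norm_sub_rev]
        refine (aux_norm (hlam0 n) _ _).trans (add_le_add ?_ le_rfl)
        rw [dist_comm]
        exact mul_le_mul_of_nonneg_left hax.le (hlam0 n)
      · rw [norm_sub_rev]
        refine (aux_norm (hmu0 n) _ _).trans (add_le_add ?_ le_rfl)
        rw [dist_comm]
        exact mul_le_mul_of_nonneg_left hby.le (hmu0 n)
    rw [Metric.tendsto_atTop]
    intro ε hε
    obtain ⟨w, hw, hzw⟩ := Metric.mem_closure_iff.1 hz (ε / 2) (half_pos hε)
    obtain ⟨N, hN⟩ := (Metric.tendsto_atTop.1 (key w hw)) (ε / 2) (half_pos hε)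
    refine ⟨N, fun n hn => ?_⟩
    have h1 := hN n hn
    rw [Real.dist_0_eq_abs, abs_of_nonneg infDist_nonneg] at h1 ⊢
    have h2 : infDist z (lam n • X n + mu n • Y n) ≤ _ :=
      infDist_le_infDist_add_dist (y := w)
    linarith
end

section
/- Let E be a real Banach space, let {X_n}, {Y_n} be sequences in ℭ(E) and X, Y ∈ ℭ(E). Suppose X_n →W X and Y_n →W Y (Wijsman convergence), and h(X_n, Y_n) < r for every n ∈ ℕ, where r > 0. Then h(X, Y) ≤ r. -/
open Metric Filter Topology

variable {E : Type*} [NormedAddCommGroup E] [NormedSpace ℝ E] [CompleteSpace E]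

/-- The Pompeiu–Hausdorff distance `h(A,B) = max (e(A,B)) (e(B,A))`. -/
noncomputable def hdist (A B : Set E) : ℝ := max (excess A B) (excess B A)

/-- Wijsman convergence: `d(z, Xₙ) → d(z, L)` for every `z`. -/
def WijsmanConv (X : ℕ → Set E) (L : Set E) : Prop :=
  ∀ z : E, Tendsto (fun n => infDist z (X n)) atTop (𝓝 (infDist z L))

theorem infDist_le_of_hdist_aux (X Y : Set E) (hX : X.Nonempty) (hY : Y.Nonempty)
    (hXbd : Bornology.IsBounded X) (r : ℝ) (h : excess X Y < r) (a : E) :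
    infDist a Y ≤ infDist a X + r := by
  have hb : BddAbove ((fun a => infDist a Y) '' X) := by
    obtain ⟨y, hy⟩ := hY
    obtain ⟨R, hR⟩ := hXbd.subset_closedBall y
    refine ⟨R, ?_⟩
    rintro _ ⟨x, hx, rfl⟩
    exact (infDist_le_dist_of_mem hy).trans (hR hx)
  have : infDist a Y - r ≤ infDist a X := by
    rw [le_infDist hX]
    intro x hx
    have h1 : infDist x Y ≤ excess X Y := le_csSup hb ⟨x, hx, rfl⟩
    have h2 : infDist a Y ≤ infDist x Y + dist a x := infDist_le_infDist_add_dist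
    linarith
  linarith

theorem excess_le_aux (X Y : ℕ → Set E) (A B : Set E)
    (hXne : ∀ n, (X n).Nonempty) (hXbd : ∀ n, Bornology.IsBounded (X n))
    (hYne : ∀ n, (Y n).Nonempty) (hAne : A.Nonempty)
    (hXW : WijsmanConv X A) (hYW : WijsmanConv Y B)
    (r : ℝ) (hXY : ∀ n, excess (X n) (Y n) < r) : excess A B ≤ r := by
  apply csSup_le (hAne.image _)
  rintro _ ⟨a, ha, rfl⟩
  have h := le_of_tendsto_of_tendsto' (hYW a) ((hXW a).add_const r)
    (fun n => infDist_le_of_hdist_aux (X n) (Y n) (hXne n) (hYne n) (hXbd n) r (hXY n) a)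
  rw [infDist_zero_of_mem ha] at h
  simpa using h

/-- Proposition 3.4: if `Xₙ →W A`, `Yₙ →W B` (Wijsman) with all sets nonempty closed
bounded, and `h(Xₙ, Yₙ) < r` for every `n`, then `h(A, B) ≤ r`. -/
theorem hdist_le_of_wijsmanConv (X Y : ℕ → Set E) (A B : Set E)
    (hXne : ∀ n, (X n).Nonempty) (hXcl : ∀ n, IsClosed (X n))
    (hXbd : ∀ n, Bornology.IsBounded (X n))
    (hYne : ∀ n, (Y n).Nonempty) (hYcl : ∀ n, IsClosed (Y n))
    (hYbd : ∀ n, Bornology.IsBounded (Y n))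
    (hAne : A.Nonempty) (hAcl : IsClosed A) (hAbd : Bornology.IsBounded A)
    (hBne : B.Nonempty) (hBcl : IsClosed B) (hBbd : Bornology.IsBounded B)
    (hXW : WijsmanConv X A) (hYW : WijsmanConv Y B)
    (r : ℝ) (hr : 0 < r) (hXY : ∀ n, hdist (X n) (Y n) < r) :
    hdist A B ≤ r := by
  exact max_le
    (excess_le_aux X Y A B hXne hXbd hYne hAne hXW hYW r
      fun n => (le_max_left _ _).trans_lt (hXY n))
    (excess_le_aux Y X B A hYne hYbd hXne hBne hYW hXW r
      fun n => (le_max_right _ _).trans_lt (hXY n))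
end

section
/- Let E be a real Banach space and let 𝒵 ⊆ ℭ(E) be a nonempty set that is compact with respect to the Pompeiu–Hausdorff metric h. Let {Z_n} be a sequence with Z_n ∈ 𝒵 for all n, and let C ∈ ℭ_c(E) be a compact set. If Z_n →W C (Wijsman convergence), then Z_n →h C (Pompeiu–Hausdorff convergence). -/
open Metric Filter Topology

variable {E : Type*} [NormedAddCommGroup E] [NormedSpace ℝ E] [CompleteSpace E]

/-- A family of sets is compact in the Pompeiu–Hausdorff metric iff it is sequentially
compact: every sequence in the family has a subsequence converging in `h` to a member. -/
def HCompact (𝒵 : Set (Set E)) : Prop :=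
  ∀ Z : ℕ → Set E, (∀ n, Z n ∈ 𝒵) →
    ∃ W ∈ 𝒵, ∃ φ : ℕ → ℕ, StrictMono φ ∧
      Tendsto (fun k => hdist (Z (φ k)) W) atTop (𝓝 0)

lemma infDist_le_add_excess_aux {A B : Set E} (hA : A.Nonempty) (hAb : Bornology.IsBounded A)
    (hB : B.Nonempty) (z : E) : infDist z B ≤ infDist z A + excess A B := by
  obtain ⟨b, hb⟩ := hB
  have hbdd : BddAbove ((fun a => infDist a B) '' A) := by
    obtain ⟨r, hr⟩ := hAb.subset_closedBall b
    refine ⟨r, ?_⟩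
    rintro _ ⟨a, ha, rfl⟩
    exact (infDist_le_dist_of_mem hb).trans (hr ha)
  have h : infDist z B - excess A B ≤ infDist z A := by
    refine (le_infDist hA).2 fun {a} ha => ?_
    have h1 : infDist a B ≤ excess A B := le_csSup hbdd ⟨a, ha, rfl⟩
    have h2 : infDist z B ≤ infDist a B + dist z a := infDist_le_infDist_add_dist
    linarith
  linarith

/-- Proposition 3.5: if `𝒵 ⊆ ℭ(E)` is nonempty and compact in the Pompeiu–Hausdorff
metric, `Zₙ ∈ 𝒵` for all `n`, and `C` is a compact set in `ℭ_c(E)`, then Wijsman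
convergence `Zₙ →W C` implies Pompeiu–Hausdorff convergence `Zₙ →h C`. -/
theorem hConv_of_wijsmanConv_of_hCompact (𝒵 : Set (Set E)) (h𝒵ne : 𝒵.Nonempty)
    (h𝒵 : ∀ A ∈ 𝒵, A.Nonempty ∧ IsClosed A ∧ Bornology.IsBounded A)
    (h𝒵c : HCompact 𝒵)
    (Z : ℕ → Set E) (hZ : ∀ n, Z n ∈ 𝒵)
    (C : Set E) (hCne : C.Nonempty) (hCcl : IsClosed C)
    (hCbd : Bornology.IsBounded C) (hCcv : Convex ℝ C) (hCk : IsCompact C)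
    (hW : ∀ z : E, Tendsto (fun n => infDist z (Z n)) atTop (𝓝 (infDist z C))) :
    Tendsto (fun n => hdist (Z n) C) atTop (𝓝 0) := by
  refine tendsto_of_subseq_tendsto fun ns hns => ?_
  obtain ⟨W, hWm, φ, hφ, hlim⟩ := h𝒵c (fun k => Z (ns k)) (fun k => hZ _)
  refine ⟨φ, ?_⟩
  obtain ⟨hWne, hWcl, hWb⟩ := h𝒵 W hWm
  have key : ∀ z, infDist z W = infDist z C := by
    intro z
    have h1 : Tendsto (fun k => infDist z (Z (ns (φ k)))) atTop (𝓝 (infDist z C)) :=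
      (hW z).comp (hns.comp hφ.tendsto_atTop)
    have h2 : Tendsto (fun k => infDist z (Z (ns (φ k)))) atTop (𝓝 (infDist z W)) := by
      rw [tendsto_iff_dist_tendsto_zero]
      refine squeeze_zero (fun _ => dist_nonneg) (fun k => ?_) hlim
      obtain ⟨ha, -, hb⟩ := h𝒵 _ (hZ (ns (φ k)))
      have e1 := infDist_le_add_excess_aux ha hb hWne z
      have e2 := infDist_le_add_excess_aux hWne hWb ha z
      have e3 : excess (Z (ns (φ k))) W ≤ hdist (Z (ns (φ k))) W := le_max_left _ _
      have e4 : excess W (Z (ns (φ k))) ≤ hdist (Z (ns (φ k))) W := le_max_right _ _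
      rw [Real.dist_eq, abs_le]
      constructor <;> linarith
    exact tendsto_nhds_unique h2 h1
  have hWC : W = C := by
    ext z
    rw [hWcl.mem_iff_infDist_zero hWne, hCcl.mem_iff_infDist_zero hCne, key z]
  rw [← hWC]
  exact hlim
end

section
/- (Mazur's theorem for spaces of sets.) Let E be a real Banach space and let 𝒵 ⊆ ℭ_c(E) be nonempty and compact in the Pompeiu–Hausdorff metric h. Define co 𝒵 = { Y ∈ ℭ_c(E) : Y = closure of λ₁X₁ + … + λ_nX_n for some n ∈ ℕ, X_i ∈ 𝒵, λ_i ∈ [0,1] with λ₁+…+λ_n = 1 }. Then the closure of co 𝒵 in the metric space (ℭ_c(E), h) is compact, and it is convex in the sense that if Y₁, Y₂ belong to it and λ ∈ [0,1], then the closure of (1−λ)Y₁ + λY₂ belongs to it. -/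
open Metric Filter Topology Pointwise

variable {E : Type*} [NormedAddCommGroup E] [NormedSpace ℝ E] [CompleteSpace E]

/-- Membership in `ℭ_c(E)`: nonempty, closed, bounded and convex. -/
def IsCBC (A : Set E) : Prop :=
  A.Nonempty ∧ IsClosed A ∧ Bornology.IsBounded A ∧ Convex ℝ A

/-- The family `co 𝒵` of closures of finite convex combinations of members of `𝒵`. -/
def coFam (𝒵 : Set (Set E)) : Set (Set E) :=
  {Y | ∃ (n : ℕ) (X : Fin n → Set E) (lam : Fin n → ℝ),
    (∀ i, X i ∈ 𝒵) ∧ (∀ i, lam i ∈ Set.Icc (0 : ℝ) 1) ∧ (∑ i, lam i) = 1 ∧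
    Y = closure (∑ i, lam i • X i)}

/-- The closure of a family of sets inside `(ℭ_c(E), h)`: members of `ℭ_c(E)` that are
`h`-limits of sequences from the family. -/
def HClosureIn (𝒮 : Set (Set E)) : Set (Set E) :=
  {Y | IsCBC Y ∧ ∃ Z : ℕ → Set E, (∀ n, Z n ∈ 𝒮) ∧
    Tendsto (fun n => hdist (Z n) Y) atTop (𝓝 0)}

theorem hd_eq {A B : Set E} (hA : IsCBC A) (hB : IsCBC B) :
    hausdorffEDist A B = ENNReal.ofReal (hdist A B) := by
  have fin : hausdorffEDist A B ≠ ⊤ :=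
    hausdorffEDist_ne_top_of_nonempty_of_bounded hA.1 hB.1 hA.2.2.1 hB.2.2.1
  have key : ∀ {A B : Set E}, IsCBC A → IsCBC B → hausdorffEDist A B ≠ ⊤ →
      (∀ x ∈ A, infDist x B ≤ excess A B) ∧ excess A B ≤ hausdorffDist A B := by
    intro A B hA hB fin
    have hle : ∀ x ∈ A, infDist x B ≤ hausdorffDist A B := fun x hx =>
      infDist_le_hausdorffDist_of_mem hx fin
    refine ⟨fun x hx => le_csSup ⟨hausdorffDist A B, ?_⟩ ⟨x, hx, rfl⟩,
      csSup_le (hA.1.image _) ?_⟩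
    · rintro _ ⟨y, hy, rfl⟩; exact hle y hy
    · rintro _ ⟨y, hy, rfl⟩; exact hle y hy
  obtain ⟨h1, h2⟩ := key hA hB fin
  obtain ⟨h3, h4⟩ := key hB hA (by rwa [hausdorffEDist_comm])
  have : hdist A B = hausdorffDist A B := by
    apply le_antisymm
    · exact max_le h2 (by rwa [hausdorffDist_comm])
    · obtain ⟨x, hx⟩ := hA.1
      refine hausdorffDist_le_of_infDist ?_ ?_ ?_
      · exact le_trans infDist_nonneg ((h1 x hx).trans (le_max_left _ _))
      · exact fun x hx => (h1 x hx).trans (le_max_left _ _)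
      · exact fun x hx => (h3 x hx).trans (le_max_right _ _)
  rw [this, hausdorffDist, ENNReal.ofReal_toReal fin]

theorem hd_tendsto {Z : ℕ → Set E} {W : Set E} (hZ : ∀ n, IsCBC (Z n)) (hW : IsCBC W) :
    Tendsto (fun n => hdist (Z n) W) atTop (𝓝 0) ↔
      Tendsto (fun n => hausdorffEDist (Z n) W) atTop (𝓝 0) := by
  have nn : ∀ n, 0 ≤ hdist (Z n) W := fun n => by
    refine le_trans ?_ (le_max_left _ _)
    apply Real.sSup_nonneg
    rintro _ ⟨x, hx, rfl⟩; exact infDist_nonneg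
  constructor
  · intro h
    simp_rw [fun n => hd_eq (hZ n) hW]
    simpa using ENNReal.tendsto_ofReal h
  · intro h
    simp_rw [fun n => hd_eq (hZ n) hW] at h
    have := (ENNReal.tendsto_toReal ENNReal.zero_ne_top).comp h
    refine Tendsto.congr ?_ this
    intro n
    simp [ENNReal.toReal_ofReal (nn n)]

theorem cbc_of_tendsto {Z : ℕ → Set E} {W : Set E} (hZ : ∀ n, IsCBC (Z n)) (hW : IsClosed W)
    (h : Tendsto (fun n => hausdorffEDist (Z n) W) atTop (𝓝 0)) : IsCBC W := by
  have ev : ∀ ε : ℝ, 0 < ε → ∃ n, hausdorffEDist (Z n) W < ENNReal.ofReal ε := fun ε hε =>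
    (h.eventually (gt_mem_nhds (ENNReal.ofReal_pos.2 hε))).exists
  refine ⟨?_, hW, ?_, ?_⟩
  · obtain ⟨n, hn⟩ := ev 1 one_pos
    exact nonempty_of_hausdorffEDist_ne_top (hZ n).1 hn.ne_top
  · obtain ⟨n, hn⟩ := ev 1 one_pos
    refine ((hZ n).2.2.1.thickening (δ := 1)).subset ?_
    intro x hx
    rw [hausdorffEDist_comm] at hn
    obtain ⟨y, hy, hxy⟩ := exists_edist_lt_of_hausdorffEDist_lt hx hn
    rw [mem_thickening_iff]
    exact ⟨y, hy, by rwa [edist_dist, ENNReal.ofReal_lt_ofReal_iff one_pos] at hxy⟩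
  · intro x hx y hy a b ha hb hab
    rw [← hW.closure_eq, Metric.mem_closure_iff]
    intro ε hε
    obtain ⟨n, hn⟩ := ev (ε / 2) (by positivity)
    have hn' := hn
    rw [hausdorffEDist_comm] at hn'
    obtain ⟨x', hx', hxx⟩ := exists_edist_lt_of_hausdorffEDist_lt hx hn'
    obtain ⟨y', hy', hyy⟩ := exists_edist_lt_of_hausdorffEDist_lt hy hn'
    obtain ⟨z, hz, hzz⟩ := exists_edist_lt_of_hausdorffEDist_lt
      ((hZ n).2.2.2 hx' hy' ha hb hab) hn
    rw [edist_dist, ENNReal.ofReal_lt_ofReal_iff (by positivity)] at hxx hyy hzz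
    refine ⟨z, hz, ?_⟩
    have e : dist (a • x + b • y) (a • x' + b • y') ≤ ε / 2 := by
      calc dist (a • x + b • y) (a • x' + b • y') ≤ dist (a • x) (a • x') + dist (b • y) (b • y') :=
            dist_add_add_le _ _ _ _
        _ = a * dist x x' + b * dist y y' := by
            simp [dist_smul₀, abs_of_nonneg ha, abs_of_nonneg hb]
        _ ≤ a * (ε / 2) + b * (ε / 2) := by gcongr
        _ = ε / 2 := by rw [← add_mul, hab, one_mul]
    linarith [dist_triangle (a • x + b • y) (a • x' + b • y') z]

theorem mem_comb {ι : Type*} [Fintype ι] (lam : ι → ℝ) (A : ι → Set E) (x : E) :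
    x ∈ ∑ i, lam i • A i ↔ ∃ a : ι → E, (∀ i, a i ∈ A i) ∧ ∑ i, lam i • a i = x := by
  rw [Set.mem_fintype_sum]
  constructor
  · rintro ⟨g, hg, rfl⟩
    choose a ha hag using fun i => Set.mem_smul_set.1 (hg i)
    exact ⟨a, ha, by simp [hag]⟩
  · rintro ⟨a, ha, rfl⟩
    exact ⟨_, fun i => Set.smul_mem_smul_set (ha i), rfl⟩

theorem hd_comb {ι : Type*} [Fintype ι] (lam : ι → ℝ) (A B : ι → Set E)
    (h0 : ∀ i, 0 ≤ lam i) (h1 : ∑ i, lam i = 1) (r : ℝ) (hr : 0 < r)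
    (h : ∀ i, hausdorffEDist (A i) (B i) < ENNReal.ofReal r) :
    hausdorffEDist (∑ i, lam i • A i) (∑ i, lam i • B i) ≤ ENNReal.ofReal r := by
  have key : ∀ A B : ι → Set E, (∀ i, hausdorffEDist (A i) (B i) < ENNReal.ofReal r) →
      ∀ x ∈ ∑ i, lam i • A i, ∃ y ∈ ∑ i, lam i • B i, edist x y ≤ ENNReal.ofReal r := by
    intro A B h x hx
    obtain ⟨a, ha, rfl⟩ := (mem_comb _ _ _).1 hx
    choose b hb hab using fun i => exists_edist_lt_of_hausdorffEDist_lt (ha i) (h i)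
    refine ⟨_, (mem_comb _ _ _).2 ⟨b, hb, rfl⟩, ?_⟩
    rw [edist_dist]
    apply ENNReal.ofReal_le_ofReal
    calc dist (∑ i, lam i • a i) (∑ i, lam i • b i) ≤ ∑ i, dist (lam i • a i) (lam i • b i) :=
          dist_sum_sum_le _ _ _
      _ ≤ ∑ i, lam i * r := by
          apply Finset.sum_le_sum
          intro i _
          have := hab i
          rw [edist_dist, ENNReal.ofReal_lt_ofReal_iff hr] at this
          rw [dist_smul₀, Real.norm_of_nonneg (h0 i)]
          exact mul_le_mul_of_nonneg_left this.le (h0 i)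
      _ = r := by rw [← Finset.sum_mul, h1, one_mul]
  refine hausdorffEDist_le_of_mem_edist (key A B h) (key B A fun i => ?_)
  rw [hausdorffEDist_comm]; exact h i

theorem closure_comb {ι : Type*} [Fintype ι] (lam : ι → ℝ) (A : ι → Set E)
    (h0 : ∀ i, 0 ≤ lam i) (h1 : ∑ i, lam i = 1) :
    closure (∑ i, lam i • closure (A i)) = closure (∑ i, lam i • A i) := by
  rw [← hausdorffEDist_zero_iff_closure_eq_closure]
  by_contra hne
  obtain ⟨r, hr, hr'⟩ := ENNReal.lt_iff_exists_nnreal_btwn.1 (pos_iff_ne_zero.2 hne)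
  have hr0 : (0 : ℝ) < r := by exact_mod_cast hr
  have := hd_comb lam (fun i => closure (A i)) A h0 h1 r hr0 (by
    intro i
    rw [hausdorffEDist_closure_left, hausdorffEDist_self]
    exact ENNReal.ofReal_pos.2 hr0)
  rw [ENNReal.ofReal_coe_nnreal] at this
  exact absurd hr' (not_lt.2 this)

theorem cbc_comb {ι : Type*} [Fintype ι] (lam : ι → ℝ) (A : ι → Set E)
    (hA : ∀ i, IsCBC (A i)) : IsCBC (closure (∑ i, lam i • A i)) := by
  refine ⟨?_, isClosed_closure, ?_, ?_⟩
  · choose a ha using fun i => (hA i).1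
    exact ⟨_, subset_closure ((mem_comb _ _ _).2 ⟨a, ha, rfl⟩)⟩
  · apply Bornology.IsBounded.closure
    choose C hC using fun i => (hA i).2.2.1.exists_norm_le
    rw [isBounded_iff_forall_norm_le]
    refine ⟨∑ i, |lam i| * C i, ?_⟩
    intro x hx
    obtain ⟨a, ha, rfl⟩ := (mem_comb _ _ _).1 hx
    refine norm_sum_le_of_le _ fun i _ => ?_
    rw [norm_smul, Real.norm_eq_abs]
    exact mul_le_mul_of_nonneg_left (hC i _ (ha i)) (abs_nonneg _)
  · apply Convex.closure
    exact convex_sum _ fun i _ => (hA i).2.2.2.smul _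

theorem cbc_coFam {𝒵 : Set (Set E)} (h𝒵 : ∀ A ∈ 𝒵, IsCBC A) : ∀ Y ∈ coFam 𝒵, IsCBC Y := by
  rintro _ ⟨n, X, lam, hX, _, _, rfl⟩
  exact cbc_comb _ _ fun i => h𝒵 _ (hX i)

theorem coFam_two {𝒵 : Set (Set E)} {Y₁ Y₂ : Set E} (h1 : Y₁ ∈ coFam 𝒵) (h2 : Y₂ ∈ coFam 𝒵)
    (w : Fin 2 → ℝ) (w0 : ∀ i, 0 ≤ w i) (w1 : ∑ i, w i = 1) :
    closure (∑ i, w i • (![Y₁, Y₂] : Fin 2 → Set E) i) ∈ coFam 𝒵 := by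
  obtain ⟨n, X, lam, hX, hl, hs, rfl⟩ := h1
  obtain ⟨m, X', lam', hX', hl', hs', rfl⟩ := h2
  have hw : w 0 + w 1 = 1 := by simpa [Fin.sum_univ_two] using w1
  have e : (∑ i, Fin.append (fun i => w 0 * lam i) (fun i => w 1 * lam' i) i) = 1 := by
    rw [Fin.sum_univ_add]
    simp [← Finset.mul_sum, hs, hs', hw]
  have nn : ∀ i, 0 ≤ Fin.append (fun i => w 0 * lam i) (fun i => w 1 * lam' i) i := by
    intro i
    induction i using Fin.addCases with
    | left i => simpa using mul_nonneg (w0 0) (hl i).1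
    | right i => simpa using mul_nonneg (w0 1) (hl' i).1
  refine ⟨n + m, Fin.append X X', Fin.append (fun i => w 0 * lam i) (fun i => w 1 * lam' i),
    ?_, ?_, e, ?_⟩
  · intro i
    induction i using Fin.addCases with
    | left i => simpa using hX i
    | right i => simpa using hX' i
  · intro i
    refine ⟨nn i, ?_⟩
    rw [← e]
    exact Finset.single_le_sum (fun i _ => nn i) (Finset.mem_univ i)
  · have := closure_comb w (![∑ i, lam i • X i, ∑ i, lam' i • X' i] : Fin 2 → Set E) w0 w1
    simp only [Fin.sum_univ_two, Matrix.cons_val_zero, Matrix.cons_val_one] at this ⊢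
    rw [this, Fin.sum_univ_add]
    simp [Finset.smul_sum, mul_smul]

theorem conv_part {𝒵 : Set (Set E)} (h𝒵 : ∀ A ∈ 𝒵, IsCBC A)
    {Y₁ Y₂ : Set E} (h1 : Y₁ ∈ HClosureIn (coFam 𝒵)) (h2 : Y₂ ∈ HClosureIn (coFam 𝒵))
    (w : Fin 2 → ℝ) (w0 : ∀ i, 0 ≤ w i) (w1 : ∑ i, w i = 1) :
    closure (∑ i, w i • (![Y₁, Y₂] : Fin 2 → Set E) i) ∈ HClosureIn (coFam 𝒵) := by
  obtain ⟨c1, Z, hZ, hZt⟩ := h1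
  obtain ⟨c2, Z', hZ', hZt'⟩ := h2
  have c : IsCBC (closure (∑ i, w i • (![Y₁, Y₂] : Fin 2 → Set E) i)) := by
    apply cbc_comb
    simp [Fin.forall_fin_two, c1, c2]
  rw [hd_tendsto (fun n => cbc_coFam h𝒵 _ (hZ n)) c1] at hZt
  rw [hd_tendsto (fun n => cbc_coFam h𝒵 _ (hZ' n)) c2] at hZt'
  have hm := fun n => coFam_two (hZ n) (hZ' n) w w0 w1
  refine ⟨c, _, hm, ?_⟩
  rw [hd_tendsto (fun n => cbc_coFam h𝒵 _ (hm n)) c, ENNReal.tendsto_nhds_zero]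
  intro ε hε
  obtain ⟨r, hr, hr'⟩ := ENNReal.lt_iff_exists_nnreal_btwn.1 hε
  have hr0 : (0 : ℝ) < r := by exact_mod_cast hr
  filter_upwards [hZt.eventually (gt_mem_nhds (ENNReal.ofReal_pos.2 hr0)),
    hZt'.eventually (gt_mem_nhds (ENNReal.ofReal_pos.2 hr0))] with n hn hn'
  rw [hausdorffEDist_closure]
  refine (hd_comb w _ _ w0 w1 r hr0 ?_).trans ?_
  · simp [Fin.forall_fin_two] at hn hn' ⊢
    exact ⟨hn, hn'⟩
  · rw [ENNReal.ofReal_coe_nnreal]; exact hr'.le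

theorem smul_sum_convex {ι : Type*} (s : Finset ι) (lam : ι → ℝ) (h0 : ∀ i, 0 ≤ lam i)
    {C : Set E} (hC : Convex ℝ C) (hne : C.Nonempty) :
    ∑ i ∈ s, lam i • C = (∑ i ∈ s, lam i) • C := by
  classical
  induction s using Finset.induction_on with
  | empty => simp [Set.zero_smul_set hne]
  | insert a s ha ih =>
    rw [Finset.sum_insert ha, Finset.sum_insert ha, ih,
      hC.add_smul (h0 a) (Finset.sum_nonneg fun i _ => h0 i)]

theorem merge {ι κ : Type*} [Fintype ι] [Fintype κ] [DecidableEq κ] (f : ι → κ) (lam : ι → ℝ)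
    (h0 : ∀ i, 0 ≤ lam i) (N : κ → Set E) (hN : ∀ k, IsCBC (N k)) :
    ∑ i, lam i • N (f i) = ∑ k, (∑ i with f i = k, lam i) • N k := by
  rw [← Finset.sum_fiberwise (s := Finset.univ) (g := f)]
  refine Finset.sum_congr rfl fun k _ => ?_
  rw [← smul_sum_convex _ _ h0 (hN k).2.2.2 (hN k).1]
  refine Finset.sum_congr rfl fun i hi => ?_
  rw [(Finset.mem_filter.1 hi).2]

theorem cont_comb {κ : Type*} [Fintype κ] (N : κ → Set E) (hN : ∀ k, IsCBC (N k)) :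
    Continuous fun μ : κ → ℝ => TopologicalSpace.Closeds.closure (∑ k, μ k • N k) := by
  choose C hC using fun k => (hN k).2.2.1.exists_norm_le
  have key : ∀ μ ν : κ → ℝ, ∀ x ∈ ∑ k, μ k • N k, ∃ y ∈ ∑ k, ν k • N k,
      edist x y ≤ ENNReal.ofReal (∑ k, |μ k - ν k| * C k) := by
    intro μ ν x hx
    obtain ⟨a, ha, rfl⟩ := (mem_comb _ _ _).1 hx
    refine ⟨_, (mem_comb _ _ _).2 ⟨a, ha, rfl⟩, ?_⟩
    rw [edist_dist]
    apply ENNReal.ofReal_le_ofReal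
    rw [dist_eq_norm, ← Finset.sum_sub_distrib]
    refine norm_sum_le_of_le _ fun i _ => ?_
    rw [← sub_smul, norm_smul, Real.norm_eq_abs]
    exact mul_le_mul_of_nonneg_left (hC i _ (ha i)) (abs_nonneg _)
  rw [continuous_iff_continuousAt]
  intro ν
  rw [ContinuousAt, tendsto_iff_edist_tendsto_0]
  have hc : Continuous fun μ : κ → ℝ => ENNReal.ofReal (∑ k, |μ k - ν k| * C k) :=
    ENNReal.continuous_ofReal.comp (by fun_prop)
  have ht := hc.tendsto ν
  simp only [sub_self, abs_zero, zero_mul, Finset.sum_const_zero, ENNReal.ofReal_zero] at ht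
  refine tendsto_of_tendsto_of_tendsto_of_le_of_le tendsto_const_nhds ht (fun _ => bot_le) ?_
  intro μ
  change hausdorffEDist (closure _) (closure _) ≤ _
  rw [hausdorffEDist_closure]
  refine hausdorffEDist_le_of_mem_edist (key μ ν) ?_
  intro x hx
  obtain ⟨y, hy, hxy⟩ := key ν μ x hx
  refine ⟨y, hy, hxy.trans_eq ?_⟩
  simp_rw [abs_sub_comm]

theorem tb {𝒵 : Set (Set E)} (h𝒵 : ∀ A ∈ 𝒵, IsCBC A) (h𝒵c : HCompact 𝒵) :
    TotallyBounded {C : TopologicalSpace.Closeds E | (C : Set E) ∈ coFam 𝒵} := by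
  classical
  have hc : IsSeqCompact {C : TopologicalSpace.Closeds E | (C : Set E) ∈ 𝒵} := by
    intro Z hZ
    obtain ⟨W, hW, φ, hφ, ht⟩ := h𝒵c (fun n => Z n) hZ
    refine ⟨⟨W, (h𝒵 W hW).2.1⟩, hW, φ, hφ, ?_⟩
    rw [tendsto_iff_edist_tendsto_0]
    exact (hd_tendsto (fun n => h𝒵 _ (hZ (φ n))) (h𝒵 W hW)).1 ht
  have hc' := (hc.isCompact).totallyBounded
  rw [EMetric.totallyBounded_iff]
  intro ε hε
  obtain ⟨r, hr, hr'⟩ := ENNReal.lt_iff_exists_nnreal_btwn.1 (ENNReal.half_pos hε.ne')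
  have hr0 : (0 : ℝ) < r := by exact_mod_cast hr
  obtain ⟨t, htZ, htf, htc⟩ := EMetric.totallyBounded_iff'.1 hc' _ (ENNReal.ofReal_pos.2 hr0)
  have : Fintype t := htf.fintype
  have hN : ∀ k : t, IsCBC (k.1 : Set E) := fun k => h𝒵 _ (htZ k.2)
  have hK := ((isCompact_stdSimplex ℝ t).image (cont_comb (fun k : t => (k.1 : Set E)) hN)).totallyBounded
  obtain ⟨s, hsf, hsc⟩ := EMetric.totallyBounded_iff.1 hK _ (ENNReal.half_pos hε.ne')
  refine ⟨s, hsf, ?_⟩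
  rintro Y ⟨n, X, lam, hX, hl, hs, hY⟩
  have hnear : ∀ i, ∃ k : t, hausdorffEDist (X i) (k.1 : Set E) < ENNReal.ofReal r := by
    intro i
    have := htc (show (⟨X i, (h𝒵 _ (hX i)).2.1⟩ : TopologicalSpace.Closeds E) ∈ _ from hX i)
    simp only [Set.mem_iUnion] at this
    obtain ⟨y, hy, hxy⟩ := this
    exact ⟨⟨y, hy⟩, hxy⟩
  choose f hf using hnear
  have hd := hd_comb lam X (fun i => ((f i).1 : Set E)) (fun i => (hl i).1) hs r hr0 hf
  rw [merge f lam (fun i => (hl i).1) (fun k : t => (k.1 : Set E)) hN] at hd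
  have hmem : (fun k => ∑ i with f i = k, lam i) ∈ stdSimplex ℝ t := by
    refine ⟨fun k => Finset.sum_nonneg fun i _ => (hl i).1, ?_⟩
    rw [← hs]
    exact Finset.sum_fiberwise _ _ _
  have hcov := hsc ⟨_, hmem, rfl⟩
  simp only [Set.mem_iUnion] at hcov ⊢
  obtain ⟨y, hy, hxy⟩ := hcov
  refine ⟨y, hy, ?_⟩
  refine lt_of_le_of_lt (edist_triangle _ (TopologicalSpace.Closeds.closure
    (∑ k : t, (∑ i with f i = k, lam i) • (k.1 : Set E))) _) ?_
  rw [← ENNReal.add_halves ε]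
  refine ENNReal.add_lt_add ?_ hxy
  refine lt_of_le_of_lt ?_ hr'
  rw [← ENNReal.ofReal_coe_nnreal]
  change hausdorffEDist (Y : Set E) (closure _) ≤ _
  rw [hY, hausdorffEDist_closure]
  exact hd

/-- Proposition 3.6 (Mazur's theorem for spaces of sets): if `𝒵 ⊆ ℭ_c(E)` is nonempty
and compact in the Pompeiu–Hausdorff metric, then the closure of `co 𝒵` in
`(ℭ_c(E), h)` is compact and convex. -/
theorem mazur_for_sets (𝒵 : Set (Set E)) (h𝒵ne : 𝒵.Nonempty)
    (h𝒵 : ∀ A ∈ 𝒵, IsCBC A) (h𝒵c : HCompact 𝒵) :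
    HCompact (HClosureIn (coFam 𝒵)) ∧
      ∀ Y₁ ∈ HClosureIn (coFam 𝒵), ∀ Y₂ ∈ HClosureIn (coFam 𝒵),
        ∀ lam : ℝ, 0 ≤ lam → lam ≤ 1 →
          closure ((1 - lam) • Y₁ + lam • Y₂) ∈ HClosureIn (coFam 𝒵) := by
  refine ⟨?_, ?_⟩
  · have hK : IsCompact (closure {C : TopologicalSpace.Closeds E | (C : Set E) ∈ coFam 𝒵}) :=
      isCompact_iff_totallyBounded_isComplete.2 ⟨(tb h𝒵 h𝒵c).closure, isClosed_closure.isComplete⟩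
    intro Y hY
    have hmem : ∀ n, (⟨Y n, (hY n).1.2.1⟩ : TopologicalSpace.Closeds E) ∈
        closure {C : TopologicalSpace.Closeds E | (C : Set E) ∈ coFam 𝒵} := by
      intro n
      obtain ⟨c, Z, hZ, ht⟩ := hY n
      rw [mem_closure_iff_seq_limit]
      refine ⟨fun k => ⟨Z k, (cbc_coFam h𝒵 _ (hZ k)).2.1⟩, hZ, ?_⟩
      rw [tendsto_iff_edist_tendsto_0]
      exact (hd_tendsto (fun k => cbc_coFam h𝒵 _ (hZ k)) c).1 ht
    obtain ⟨W, hW, φ, hφ, ht⟩ := hK.isSeqCompact hmem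
    rw [tendsto_iff_edist_tendsto_0] at ht
    have cW : IsCBC (W : Set E) := cbc_of_tendsto (fun n => (hY (φ n)).1) W.isClosed ht
    refine ⟨W, ⟨cW, ?_⟩, φ, hφ, (hd_tendsto (fun n => (hY (φ n)).1) cW).2 ht⟩
    obtain ⟨Z, hZ, hZt⟩ := mem_closure_iff_seq_limit.1 hW
    rw [tendsto_iff_edist_tendsto_0] at hZt
    exact ⟨fun n => Z n, hZ, (hd_tendsto (fun n => cbc_coFam h𝒵 _ (hZ n)) cW).2 hZt⟩
  · intro Y₁ h1 Y₂ h2 lam l0 l1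
    have := conv_part h𝒵 h1 h2 ![1 - lam, lam]
      (by simp [Fin.forall_fin_two, l0, l1]) (by simp [Fin.sum_univ_two])
    simpa [Fin.sum_univ_two] using this
end

section
/- Let E be a real Banach space and C ∈ ℭ(E). For n ∈ ℕ let C[n] = (C + C + … + C)/n denote the n-fold Minkowski sum of C with itself, scaled by 1/n. Then the closures of C[n] converge in the sense of Fisher to the closed convex hull of C as n → ∞. -/
open Metric Filter Topology Pointwise

variable {E : Type*} [NormedAddCommGroup E] [NormedSpace ℝ E] [CompleteSpace E]

theorem aux_nsmul_subset (C : Set E) (hCne : C.Nonempty) (n : ℕ) :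
    n • C ⊆ (n : ℝ) • convexHull ℝ C := by
  induction n with
  | zero =>
    rw [zero_nsmul, Nat.cast_zero, Set.zero_smul_set (hCne.mono (subset_convexHull ℝ C))]
  | succ k ih =>
    rw [succ_nsmul, Nat.cast_add, Nat.cast_one,
      (convex_convexHull ℝ C).add_smul (Nat.cast_nonneg k) zero_le_one, one_smul]
    exact Set.add_subset_add ih (subset_convexHull ℝ C)

theorem aux_nsmul_mem (C : Set E) (x : E) (hx : x ∈ C) (n : ℕ) : n • x ∈ n • C := by
  induction n with
  | zero => simp
  | succ k ih =>
    rw [succ_nsmul, succ_nsmul]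
    exact Set.add_mem_add ih hx

theorem aux_approx (C : Set E) (z : E) (hz : z ∈ convexHull ℝ C) :
    ∃ M : ℝ, ∀ k : ℕ, ∃ y ∈ k • C, ‖(k : ℝ) • z - y‖ ≤ M := by
  have key : convexHull ℝ C ⊆ {z : E | ∃ M : ℝ, ∀ k : ℕ, ∃ y ∈ k • C, ‖(k : ℝ) • z - y‖ ≤ M} := by
    apply convexHull_min
    · intro x hx
      refine ⟨0, fun k => ⟨k • x, aux_nsmul_mem C x hx k, ?_⟩⟩
      simp [Nat.cast_smul_eq_nsmul]
    · rintro z₁ ⟨M₁, h₁⟩ z₂ ⟨M₂, h₂⟩ a b ha hb hab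
      refine ⟨M₁ + M₂ + ‖z₁‖ + ‖z₂‖, fun k => ?_⟩
      have hk : (0 : ℝ) ≤ k := Nat.cast_nonneg k
      have hak : 0 ≤ a * k := mul_nonneg ha hk
      obtain ⟨p, hp⟩ : ∃ p, p = ⌊a * k⌋₊ := ⟨_, rfl⟩
      have hp1 : (p : ℝ) ≤ a * k := hp ▸ Nat.floor_le hak
      have hp2 : a * k < p + 1 := hp ▸ Nat.lt_floor_add_one _
      have hpk : p ≤ k := by
        have : (p : ℝ) ≤ k := by nlinarith
        exact_mod_cast this
      obtain ⟨q, rfl⟩ := Nat.exists_eq_add_of_le hpk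
      obtain ⟨y₁, hy₁, e₁⟩ := h₁ p
      obtain ⟨y₂, hy₂, e₂⟩ := h₂ q
      refine ⟨y₁ + y₂, ?_, ?_⟩
      · rw [add_nsmul]
        exact Set.add_mem_add hy₁ hy₂
      · push_cast at *
        obtain ⟨t, ht⟩ : ∃ t : ℝ, t = a * (p + q) - p := ⟨_, rfl⟩
        have ht1 : |t| ≤ 1 := by rw [abs_le]; constructor <;> linarith
        have hb' : b = 1 - a := by linarith
        have e : ((p : ℝ) + q) • (a • z₁ + b • z₂) - (y₁ + y₂)
            = ((p : ℝ) • z₁ - y₁) + ((q : ℝ) • z₂ - y₂) + t • z₁ + (-t) • z₂ := by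
          rw [ht, hb']
          module
        rw [e]
        have n1 : ‖t • z₁‖ ≤ ‖z₁‖ := by
          rw [norm_smul, Real.norm_eq_abs]
          exact mul_le_of_le_one_left (norm_nonneg _) ht1
        have n2 : ‖(-t) • z₂‖ ≤ ‖z₂‖ := by
          rw [norm_smul, Real.norm_eq_abs, abs_neg]
          exact mul_le_of_le_one_left (norm_nonneg _) ht1
        exact (norm_add₄_le).trans (by linarith)
  exact key hz

/-- Proposition 4.1: for `C ∈ ℭ(E)`, the closures of the sets
`C[n] = (C + ⋯ + C)/n` (`n`-fold Minkowski sum scaled by `1/n`) Fisher-converge to the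
closed convex hull of `C`.  Here `(n+1) • C` is the `(n+1)`-fold Minkowski sum. -/
theorem fisherConv_average_self (C : Set E)
    (hCne : C.Nonempty) (hCcl : IsClosed C) (hCbd : Bornology.IsBounded C) :
    FisherConv (fun n => closure ((((n : ℝ) + 1))⁻¹ • ((n + 1) • C)))
      (closure (convexHull ℝ C)) := by
  obtain ⟨c, hc⟩ := hCne
  have hne : ∀ n : ℕ, ((((n : ℝ) + 1))⁻¹ • ((n + 1) • C)).Nonempty := fun n =>
    ⟨_, Set.smul_mem_smul_set (aux_nsmul_mem C c hc (n + 1))⟩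
  constructor
  · have h0 : ∀ n : ℕ, excess (closure ((((n : ℝ) + 1))⁻¹ • ((n + 1) • C)))
        (closure (convexHull ℝ C)) = 0 := by
      intro n
      have hpos : ((n : ℝ) + 1) ≠ 0 := by positivity
      have hsub : (((n : ℝ) + 1))⁻¹ • ((n + 1) • C) ⊆ convexHull ℝ C := by
        have h := Set.smul_set_mono (a := ((n : ℝ) + 1)⁻¹) (aux_nsmul_subset C ⟨c, hc⟩ (n + 1))
        push_cast at h
        rwa [inv_smul_smul₀ hpos] at h
      have himg : (fun a => infDist a (closure (convexHull ℝ C))) ''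
          (closure ((((n : ℝ) + 1))⁻¹ • ((n + 1) • C))) = {0} := by
        apply Set.eq_singleton_iff_nonempty_unique_mem.2
        refine ⟨(hne n).closure.image _, ?_⟩
        rintro _ ⟨x, hx, rfl⟩
        exact infDist_zero_of_mem (closure_mono hsub hx)
      unfold excess
      rw [himg, csSup_singleton]
    simp only [h0]
    exact tendsto_const_nhds
  · intro z hz
    rw [Metric.tendsto_atTop]
    intro ε hε
    obtain ⟨w, hw, hzw⟩ := Metric.mem_closure_iff.1 hz (ε / 2) (by positivity)
    obtain ⟨M, hM⟩ := aux_approx C w hw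
    obtain ⟨N, hN⟩ := exists_nat_gt (M / (ε / 2))
    refine ⟨N, fun n hn => ?_⟩
    rw [Real.dist_eq, sub_zero, abs_of_nonneg infDist_nonneg, infDist_closure]
    obtain ⟨y, hy, hyM⟩ := hM (n + 1)
    have hpos : (0 : ℝ) < (n : ℝ) + 1 := by positivity
    have hmem : ((n : ℝ) + 1)⁻¹ • y ∈ (((n : ℝ) + 1))⁻¹ • ((n + 1) • C) :=
      Set.smul_mem_smul_set hy
    have hd : dist w (((n : ℝ) + 1)⁻¹ • y) < ε / 2 := by
      have e : w - ((n : ℝ) + 1)⁻¹ • y = ((n : ℝ) + 1)⁻¹ • (((n : ℝ) + 1) • w - y) := by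
        rw [smul_sub, inv_smul_smul₀ hpos.ne']
      push_cast at hyM
      rw [dist_eq_norm, e, norm_smul, norm_inv, Real.norm_of_nonneg hpos.le,
        inv_mul_lt_iff₀ hpos]
      have hn' : (N : ℝ) ≤ n := by exact_mod_cast hn
      rw [div_lt_iff₀ (by positivity)] at hN
      nlinarith
    calc infDist z _ ≤ dist z (((n : ℝ) + 1)⁻¹ • y) := infDist_le_dist_of_mem hmem
      _ ≤ dist z w + dist w (((n : ℝ) + 1)⁻¹ • y) := dist_triangle _ _ _
      _ < ε := by linarith
end

section
/- (Convexification in the limit.) Let E be a real Banach space, let 𝒵 ⊆ ℭ(E) be nonempty and compact in the Pompeiu–Hausdorff metric h, let {X_n} be a sequence with X_n ∈ 𝒵 for all n, and let C ∈ ℭ_c(E). If the closures of (co̅X₁ + … + co̅X_n)/n Fisher-converge to C as n → ∞, where co̅X denotes the closed convex hull of X, then the closures of (X₁ + … + X_n)/n Fisher-converge to C as n → ∞. -/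
open Metric Filter Topology Pointwise

variable {E : Type*} [NormedAddCommGroup E] [NormedSpace ℝ E] [CompleteSpace E]

def CloseSets (ε : ℝ) (A B : Set E) : Prop :=
  (∀ a ∈ A, ∃ b ∈ B, dist a b < ε) ∧ (∀ b ∈ B, ∃ a ∈ A, dist b a < ε)

lemma bddAbove_infDist {A B : Set E} (hA : Bornology.IsBounded A) (hB : B.Nonempty) :
    BddAbove ((fun a => infDist a B) '' A) := by
  obtain ⟨b, hb⟩ := hB
  obtain ⟨R, hR⟩ := hA.subset_closedBall b
  refine ⟨R, ?_⟩
  rintro _ ⟨a, ha, rfl⟩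
  exact (infDist_le_dist_of_mem hb).trans (hR ha)

lemma excess_lt {A B : Set E} (hA : Bornology.IsBounded A) (hB : B.Nonempty) {ε : ℝ}
    (h : excess A B < ε) : ∀ a ∈ A, ∃ b ∈ B, dist a b < ε := by
  intro a ha
  have : infDist a B < ε :=
    (le_csSup (bddAbove_infDist hA hB) (Set.mem_image_of_mem _ ha)).trans_lt h
  exact (infDist_lt_iff hB).1 this

lemma net (X : ℕ → Set E) (𝒵 : Set (Set E))
    (h𝒵 : ∀ A ∈ 𝒵, A.Nonempty ∧ IsClosed A ∧ Bornology.IsBounded A)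
    (h𝒵c : HCompact 𝒵) (hX : ∀ n, X n ∈ 𝒵) {ε : ℝ} (hε : 0 < ε) :
    ∃ F : Finset ℕ, ∀ i, ∃ j ∈ F, CloseSets ε (X i) (X j) := by
  by_contra! hcon
  obtain ⟨f, -, hf⟩ := exists_seq_of_forall_finset_exists (fun _ : ℕ => True)
    (fun x y => ¬ CloseSets ε (X y) (X x)) (fun s _ => by
      obtain ⟨i, hi⟩ := hcon s
      exact ⟨i, trivial, hi⟩)
  obtain ⟨W, hW, φ, hφ, ht⟩ := h𝒵c (fun n => X (f n)) (fun n => hX _)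
  obtain ⟨N, hN⟩ := eventually_atTop.1 (ht.eventually (gt_mem_nhds (half_pos hε)))
  have key : ∀ k ≥ N, CloseSets (ε/2) (X (f (φ k))) W := by
    intro k hk
    have h := hN k hk
    have h1 := h𝒵 _ (hX (f (φ k)))
    have h2 := h𝒵 _ hW
    exact ⟨excess_lt h1.2.2 h2.1 ((le_max_left _ _).trans_lt h),
      excess_lt h2.2.2 h1.1 ((le_max_right _ _).trans_lt h)⟩
  refine hf _ _ (hφ (Nat.lt_succ_self N)) ?_
  have a := key N le_rfl
  have b := key (N+1) (Nat.le_succ _)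
  constructor
  · intro x hx
    obtain ⟨w, hw, h1⟩ := b.1 x hx
    obtain ⟨y, hy, h2⟩ := a.2 w hw
    exact ⟨y, hy, by linarith [dist_triangle x w y]⟩
  · intro x hx
    obtain ⟨w, hw, h1⟩ := a.1 x hx
    obtain ⟨y, hy, h2⟩ := b.2 w hw
    exact ⟨y, hy, by linarith [dist_triangle x w y]⟩

lemma cvx_round_one (W : Set E) (w : E) (hw : w ∈ convexHull ℝ W) :
    ∃ K : ℝ, ∀ I : Finset ℕ, ∃ y : ℕ → E, (∀ i, y i ∈ W) ∧ ‖∑ i ∈ I, (y i - w)‖ ≤ K := by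
  have hsub : convexHull ℝ W ⊆ {w : E | ∃ K : ℝ, ∀ I : Finset ℕ, ∃ y : ℕ → E,
      (∀ i, y i ∈ W) ∧ ‖∑ i ∈ I, (y i - w)‖ ≤ K} := by
    refine convexHull_min ?_ ?_
    · intro x hx
      exact ⟨0, fun I => ⟨fun _ => x, fun _ => hx, by simp⟩⟩
    · rintro u ⟨K, hK⟩ v ⟨L, hL⟩ a b ha hb hab
      refine ⟨K + L + ‖u - v‖, fun I => ?_⟩
      have hfl : ⌊a * (I.card : ℝ)⌋₊ ≤ I.card := by
        apply Nat.floor_le_of_le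
        have : (0:ℝ) ≤ I.card := by positivity
        nlinarith
      obtain ⟨I₁, hI₁, hc⟩ := Finset.exists_subset_card_eq hfl
      obtain ⟨y, hy, hyK⟩ := hK I₁
      obtain ⟨t, ht, htL⟩ := hL (I \ I₁)
      refine ⟨fun i => if i ∈ I₁ then y i else t i, fun i => ?_, ?_⟩
      · dsimp only
        split_ifs
        exacts [hy i, ht i]
      · have e1 : ∑ i ∈ I₁, ((if i ∈ I₁ then y i else t i) - (a • u + b • v))
            = ∑ i ∈ I₁, (y i - u) + (I₁.card : ℝ) • (u - (a • u + b • v)) := by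
          rw [Nat.cast_smul_eq_nsmul, ← Finset.sum_const, ← Finset.sum_add_distrib]
          refine Finset.sum_congr rfl fun i hi => ?_
          rw [if_pos hi]; abel
        have e2 : ∑ i ∈ I \ I₁, ((if i ∈ I₁ then y i else t i) - (a • u + b • v))
            = ∑ i ∈ I \ I₁, (t i - v) + ((I \ I₁).card : ℝ) • (v - (a • u + b • v)) := by
          rw [Nat.cast_smul_eq_nsmul, ← Finset.sum_const, ← Finset.sum_add_distrib]
          refine Finset.sum_congr rfl fun i hi => ?_
          rw [if_neg (Finset.mem_sdiff.1 hi).2]; abel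
        have hcard : ((I \ I₁).card : ℝ) = I.card - I₁.card := by
          rw [Finset.card_sdiff_of_subset hI₁, Nat.cast_sub (Finset.card_le_card hI₁)]
        have hb' : b = 1 - a := by linarith
        have e3 : (I₁.card : ℝ) • (u - (a • u + b • v)) +
            ((I \ I₁).card : ℝ) • (v - (a • u + b • v)) =
            ((I₁.card : ℝ) - a * I.card) • (u - v) := by
          rw [hcard, hb']; module
        rw [← Finset.sum_sdiff hI₁, e1, e2]
        have e4 : ∑ i ∈ I \ I₁, (t i - v) + ((I \ I₁).card : ℝ) • (v - (a • u + b • v)) +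
            (∑ i ∈ I₁, (y i - u) + (I₁.card : ℝ) • (u - (a • u + b • v))) =
            ∑ i ∈ I₁, (y i - u) + ∑ i ∈ I \ I₁, (t i - v) +
              ((I₁.card : ℝ) - a * I.card) • (u - v) := by
          rw [← e3]; abel
        rw [e4]
        refine norm_add₃_le.trans (add_le_add (add_le_add hyK htL) ?_)
        rw [norm_smul]
        have : ‖(I₁.card : ℝ) - a * I.card‖ ≤ 1 := by
          rw [Real.norm_eq_abs, abs_le, hc]
          have h1 := Nat.floor_le (show 0 ≤ a * (I.card : ℝ) by positivity)
          have h2 := Nat.lt_floor_add_one (a * (I.card : ℝ))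
          constructor <;> linarith
        exact mul_le_of_le_one_left (norm_nonneg _) this
  exact hsub hw

lemma round_many {ι : Type*} [Fintype ι] [DecidableEq ι] (J : ℕ → ι) (A : ι → Set E) (u : ι → E)
    (hu : ∀ j, u j ∈ convexHull ℝ (A j)) :
    ∃ K : ℝ, ∀ I : Finset ℕ, ∃ y : ℕ → E, (∀ i, y i ∈ A (J i)) ∧
      ‖∑ i ∈ I, (y i - u (J i))‖ ≤ K := by
  choose K hK using fun j => cvx_round_one (A j) (u j) (hu j)
  refine ⟨∑ j, K j, fun I => ?_⟩
  choose y hy hyK using fun j => hK j (I.filter (fun i => J i = j))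
  refine ⟨fun i => y (J i) i, fun i => hy _ _, ?_⟩
  rw [← Finset.sum_fiberwise I J]
  refine (norm_sum_le _ _).trans (Finset.sum_le_sum fun j _ => ?_)
  refine le_trans (le_of_eq ?_) (hyK j)
  congr 1
  refine Finset.sum_congr rfl fun i hi => ?_
  dsimp only
  rw [(Finset.mem_filter.1 hi).2]

/-- group a sum of points by class -/
lemma group_pts {ι : Type*} [Fintype ι] [DecidableEq ι] (J : ℕ → ι) (B : ι → Set E)
    (hB : ∀ j, Convex ℝ (B j)) (hne : ∀ j, (B j).Nonempty)
    (w : ℕ → E) (I : Finset ℕ) (hw : ∀ i ∈ I, w i ∈ B (J i)) :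
    ∃ u : ι → E, (∀ j, u j ∈ B j) ∧ ∑ i ∈ I, w i = ∑ i ∈ I, u (J i) := by
  have h : ∀ j, ∃ u ∈ B j, ∑ i ∈ I.filter (fun i => J i = j), w i =
      ∑ i ∈ I.filter (fun i => J i = j), u := by
    intro j
    set S := I.filter (fun i => J i = j) with hS
    rcases S.eq_empty_or_nonempty with h0 | h0
    · obtain ⟨b, hb⟩ := hne j
      exact ⟨b, hb, by simp [h0]⟩
    · have hc : (0:ℝ) < S.card := by exact_mod_cast h0.card_pos
      refine ⟨∑ i ∈ S, ((S.card : ℝ)⁻¹) • w i, (hB j).sum_mem ?_ ?_ ?_, ?_⟩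
      · intro i _; positivity
      · simp [hc.ne']
      · intro i hi
        have := Finset.mem_filter.1 hi
        have h2 := hw i this.1
        rwa [this.2] at h2
      · rw [Finset.sum_const, ← Finset.smul_sum, ← Nat.cast_smul_eq_nsmul ℝ, smul_smul,
          mul_inv_cancel₀ hc.ne', one_smul]
  choose u hu hs using h
  refine ⟨u, hu, ?_⟩
  rw [← Finset.sum_fiberwise I J, ← Finset.sum_fiberwise I J (fun i => u (J i))]
  refine Finset.sum_congr rfl fun j _ => ?_
  rw [hs j]
  refine Finset.sum_congr rfl fun i hi => ?_
  rw [(Finset.mem_filter.1 hi).2]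

lemma mem_avg {A : ℕ → Set E} {n : ℕ} {x : E} :
    x ∈ (((n : ℝ) + 1))⁻¹ • ∑ i ∈ Finset.range (n + 1), A i ↔
    ∃ g : ℕ → E, (∀ i ∈ Finset.range (n+1), g i ∈ A i) ∧
      (((n : ℝ) + 1))⁻¹ • ∑ i ∈ Finset.range (n + 1), g i = x := by
  constructor
  · rintro ⟨s, hs, rfl⟩
    obtain ⟨g, hg, rfl⟩ := (Set.mem_finsetSum _ _ _).1 hs
    exact ⟨g, fun i hi => hg hi, rfl⟩
  · rintro ⟨g, hg, rfl⟩
    exact ⟨_, (Set.mem_finsetSum _ _ _).2 ⟨g, fun {i} hi => hg i hi, rfl⟩, rfl⟩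

lemma avg_close {n : ℕ} {f g : ℕ → E} {ε : ℝ}
    (h : ∀ i ∈ Finset.range (n+1), dist (f i) (g i) ≤ ε) :
    ‖(((n : ℝ) + 1))⁻¹ • ∑ i ∈ Finset.range (n + 1), f i -
      (((n : ℝ) + 1))⁻¹ • ∑ i ∈ Finset.range (n + 1), g i‖ ≤ ε := by
  have hn : (0:ℝ) < n + 1 := by positivity
  rw [← smul_sub, ← Finset.sum_sub_distrib, norm_smul, norm_inv, Real.norm_of_nonneg hn.le,
    inv_mul_le_iff₀ hn]
  refine (norm_sum_le _ _).trans ?_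
  refine (Finset.sum_le_card_nsmul _ _ ε (fun i hi => by rw [← dist_eq_norm]; exact h i hi)).trans ?_
  simp

lemma avg_eq {ι : Type*} [Fintype ι] [DecidableEq ι] (J : ℕ → ι) (u : ι → E) (n : ℕ) :
    (((n : ℝ) + 1))⁻¹ • ∑ i ∈ Finset.range (n + 1), u (J i) =
    ∑ j, ((((n : ℝ) + 1))⁻¹ * (((Finset.range (n+1)).filter (fun i => J i = j)).card : ℝ)) • u j := by
  rw [← Finset.sum_fiberwise (Finset.range (n+1)) J, Finset.smul_sum]
  refine Finset.sum_congr rfl fun j _ => ?_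
  rw [mul_smul, Nat.cast_smul_eq_nsmul, ← Finset.sum_const]
  congr 1
  refine Finset.sum_congr rfl fun i hi => ?_
  rw [(Finset.mem_filter.1 hi).2]

lemma bounded_avg {A : ℕ → Set E} (hA : ∀ i, Bornology.IsBounded (A i)) (n : ℕ) :
    Bornology.IsBounded ((((n : ℝ) + 1))⁻¹ • ∑ i ∈ Finset.range (n + 1), A i) := by
  refine Bornology.IsBounded.smul₀ ?_ _
  induction (n+1) with
  | zero => simp [← Set.singleton_zero]
  | succ k ih => rw [Finset.sum_range_succ]; exact ih.add (hA k)

lemma pt_conv (𝒵 : Set (Set E))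
    (h𝒵 : ∀ A ∈ 𝒵, A.Nonempty ∧ IsClosed A ∧ Bornology.IsBounded A)
    (h𝒵c : HCompact 𝒵)
    (X : ℕ → Set E) (hX : ∀ n, X n ∈ 𝒵) (z : E)
    (hz : Tendsto (fun n : ℕ => infDist z (closure ((((n : ℝ) + 1))⁻¹ •
        ∑ i ∈ Finset.range (n + 1), closure (convexHull ℝ (X i))))) atTop (𝓝 0))
    {ε : ℝ} (hε : 0 < ε) :
    ∀ᶠ n : ℕ in atTop, infDist z (closure ((((n : ℝ) + 1))⁻¹ •
        ∑ i ∈ Finset.range (n + 1), X i)) < 6 * ε := by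
  have hXne : ∀ i, (X i).Nonempty := fun i => (h𝒵 _ (hX i)).1
  have hXb : ∀ i, Bornology.IsBounded (X i) := fun i => (h𝒵 _ (hX i)).2.2
  obtain ⟨F, hF⟩ := net X 𝒵 h𝒵 h𝒵c hX hε
  choose J₀ hJ₀ hJclose using hF
  let J : ℕ → F := fun i => ⟨J₀ i, hJ₀ i⟩
  let A : F → Set E := fun j => X j
  have hJc : ∀ i, CloseSets ε (X i) (A (J i)) := hJclose
  let p : ℕ → F → ℝ := fun n j =>
    (((n : ℝ) + 1))⁻¹ * (((Finset.range (n+1)).filter (fun i => J i = j)).card : ℝ)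
  have hp : ∀ n, p n ∈ Set.Icc (0 : F → ℝ) 1 := by
    intro n
    have hn : (0:ℝ) < n + 1 := by positivity
    refine ⟨fun j => by simp only [p, Pi.zero_apply]; positivity, fun j => ?_⟩
    simp only [p, Pi.one_apply]
    rw [inv_mul_le_iff₀ hn, mul_one]
    have := Finset.card_filter_le (Finset.range (n+1)) (fun i => J i = j)
    rw [Finset.card_range] at this
    exact_mod_cast this
  have hbd : Bornology.IsBounded (⋃ j, convexHull ℝ (A j)) :=
    Bornology.isBounded_iUnion.2 fun j => isBounded_convexHull.2 (hXb j)
  obtain ⟨D, hD0, hD⟩ := hbd.exists_pos_norm_le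
  -- approximation for the convexified averages
  have happ : ∀ᶠ n in atTop, ∃ u : F → E, (∀ j, u j ∈ convexHull ℝ (A j)) ∧
      ‖z - ∑ j, p n j • u j‖ < 3 * ε := by
    filter_upwards [hz.eventually (gt_mem_nhds hε)] with n hn
    rw [infDist_closure] at hn
    have hne : ((((n : ℝ) + 1))⁻¹ •
        ∑ i ∈ Finset.range (n + 1), closure (convexHull ℝ (X i))).Nonempty := by
      choose g hg using hXne
      exact ⟨_, mem_avg.2 ⟨g, fun i _ => subset_closure (subset_convexHull ℝ _ (hg i)), rfl⟩⟩
    obtain ⟨x, hx, hxd⟩ := (infDist_lt_iff hne).1 hn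
    obtain ⟨g, hg, rfl⟩ := mem_avg.1 hx
    have hw : ∀ i, ∃ w, i ∈ Finset.range (n+1) → w ∈ convexHull ℝ (A (J i)) ∧ dist (g i) w ≤ 2 * ε := by
      intro i
      by_cases hi : i ∈ Finset.range (n+1)
      · have h1 : convexHull ℝ (X i) ⊆ thickening ε (convexHull ℝ (A (J i))) := by
          refine convexHull_min (fun x hx => ?_) ((convex_convexHull ℝ _).thickening _)
          obtain ⟨b, hb, hd⟩ := (hJc i).1 x hx
          exact mem_thickening_iff.2 ⟨b, subset_convexHull ℝ _ hb, hd⟩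
        obtain ⟨v, hv, hvd⟩ := Metric.mem_closure_iff.1 (hg i hi) ε hε
        obtain ⟨w, hw, hwd⟩ := mem_thickening_iff.1 (h1 hv)
        exact ⟨w, fun _ => ⟨hw, by linarith [dist_triangle (g i) v w]⟩⟩
      · exact ⟨0, fun h => absurd h hi⟩
    choose w hw using hw
    obtain ⟨u, hu, hus⟩ := group_pts J (fun j => convexHull ℝ (A j))
      (fun j => convex_convexHull ℝ _) (fun j => (hXne j).mono (subset_convexHull ℝ _)) w
      (Finset.range (n+1)) (fun i hi => (hw i hi).1)
    refine ⟨u, hu, ?_⟩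
    have h2 := avg_close (fun i hi => (hw i hi).2)
    rw [hus, avg_eq J u] at h2
    rw [dist_eq_norm] at hxd
    linarith [norm_sub_le_norm_sub_add_norm_sub z
      ((((n : ℝ) + 1))⁻¹ • ∑ i ∈ Finset.range (n + 1), g i) (∑ j, p n j • u j)]
  by_contra hcon
  rw [not_eventually] at hcon
  obtain ⟨φ, hφ, hφn⟩ := extraction_of_frequently_atTop (hcon.and_eventually happ)
  obtain ⟨q, -, ψ, hψ, hq⟩ := isCompact_Icc.tendsto_subseq (fun k => hp (φ k))
  have hδ : 0 < ε / (Fintype.card F * D + 1) := by positivity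
  obtain ⟨N, hN⟩ := Metric.cauchySeq_iff'.1 hq.cauchySeq _ hδ
  obtain ⟨-, u, hu, hud⟩ := hφn (ψ N)
  obtain ⟨K, hK⟩ := round_many J A u hu
  have hlim : Tendsto (fun n : ℕ => K / ((n : ℝ) + 1)) atTop (𝓝 0) :=
    tendsto_const_nhds.div_atTop (tendsto_atTop_add_const_right _ _ tendsto_natCast_atTop_atTop)
  obtain ⟨k, hk1, hk2⟩ := (((hφ.comp hψ).tendsto_atTop.eventually
    (hlim.eventually (gt_mem_nhds hε))).and (eventually_ge_atTop N)).exists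
  have hpk := hN k hk2
  refine (hφn (ψ k)).1 ?_
  set n := φ (ψ k) with hn
  have hk1' : K / ((n : ℝ) + 1) < ε := hk1
  have hpk' : dist (p n) (p (φ (ψ N))) < ε / (Fintype.card F * D + 1) := hpk
  have s1 : ‖∑ j, p (φ (ψ N)) j • u j - ∑ j, p n j • u j‖ < ε := by
    rw [← Finset.sum_sub_distrib]
    have : ∀ j ∈ Finset.univ, ‖p (φ (ψ N)) j • u j - p n j • u j‖ ≤
        ε / (Fintype.card F * D + 1) * D := by
      intro j _
      rw [← sub_smul, norm_smul]
      have h1 : ‖p (φ (ψ N)) j - p n j‖ ≤ ε / (Fintype.card F * D + 1) := by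
        rw [← dist_eq_norm, dist_comm]
        exact (dist_le_pi_dist _ _ j).trans hpk'.le
      exact mul_le_mul h1 (hD _ (Set.mem_iUnion.2 ⟨j, hu j⟩)) (norm_nonneg _) hδ.le
    refine ((norm_sum_le _ _).trans (Finset.sum_le_card_nsmul _ _ _ this)).trans_lt ?_
    rw [nsmul_eq_mul, Finset.card_univ]
    have hpos : (0:ℝ) < Fintype.card F * D + 1 := by positivity
    calc (Fintype.card F : ℝ) * (ε / (Fintype.card F * D + 1) * D)
        = ε * (Fintype.card F * D) / (Fintype.card F * D + 1) := by ring
      _ < ε := by rw [div_lt_iff₀ hpos]; linarith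
  obtain ⟨y, hy, hyK⟩ := hK (Finset.range (n+1))
  choose x hx hxd using fun i => (hJc i).2 (y i) (hy i)
  have hn0 : (0:ℝ) < n + 1 := by positivity
  have s2 : ‖∑ j, p n j • u j - (((n : ℝ) + 1))⁻¹ • ∑ i ∈ Finset.range (n + 1), y i‖ < ε := by
    have e : ∑ j, p n j • u j = (((n : ℝ) + 1))⁻¹ • ∑ i ∈ Finset.range (n + 1), u (J i) :=
      (avg_eq J u n).symm
    rw [e, ← smul_sub, norm_smul, norm_sub_rev, ← Finset.sum_sub_distrib, norm_inv,
      Real.norm_of_nonneg hn0.le]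
    refine lt_of_le_of_lt ?_ hk1'
    rw [div_eq_inv_mul]
    gcongr
  have s3 := avg_close (n := n) (fun i _ => (hxd i).le)
  rw [infDist_closure]
  refine (infDist_le_dist_of_mem (mem_avg.2 ⟨x, fun i _ => hx i, rfl⟩)).trans_lt ?_
  rw [dist_eq_norm]
  have t1 := norm_sub_le_norm_sub_add_norm_sub z (∑ j, p (φ (ψ N)) j • u j) (∑ j, p n j • u j)
  have t2 := norm_sub_le_norm_sub_add_norm_sub z (∑ j, p n j • u j)
    ((((n : ℝ) + 1))⁻¹ • ∑ i ∈ Finset.range (n + 1), y i)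
  have t3 := norm_sub_le_norm_sub_add_norm_sub z
    ((((n : ℝ) + 1))⁻¹ • ∑ i ∈ Finset.range (n + 1), y i)
    ((((n : ℝ) + 1))⁻¹ • ∑ i ∈ Finset.range (n + 1), x i)
  linarith

/-- Theorem 4.1 (convexification in the limit): let `𝒵 ⊆ ℭ(E)` be nonempty and compact
in the Pompeiu–Hausdorff metric, `Xₙ ∈ 𝒵` for all `n`, and `C ∈ ℭ_c(E)`. If the
closures of `(co̅X₁ + ⋯ + co̅Xₙ)/n` Fisher-converge to `C`, then the closures of
`(X₁ + ⋯ + Xₙ)/n` Fisher-converge to `C`. -/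
theorem convexification_in_the_limit (𝒵 : Set (Set E)) (h𝒵ne : 𝒵.Nonempty)
    (h𝒵 : ∀ A ∈ 𝒵, A.Nonempty ∧ IsClosed A ∧ Bornology.IsBounded A)
    (h𝒵c : HCompact 𝒵)
    (X : ℕ → Set E) (hX : ∀ n, X n ∈ 𝒵)
    (C : Set E) (hCne : C.Nonempty) (hCcl : IsClosed C)
    (hCbd : Bornology.IsBounded C) (hCcv : Convex ℝ C)
    (hco : FisherConv
      (fun n => closure ((((n : ℝ) + 1))⁻¹ •
        ∑ i ∈ Finset.range (n + 1), closure (convexHull ℝ (X i)))) C) :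
    FisherConv
      (fun n => closure ((((n : ℝ) + 1))⁻¹ • ∑ i ∈ Finset.range (n + 1), X i)) C := by

  have hXne : ∀ i, (X i).Nonempty := fun i => (h𝒵 _ (hX i)).1
  have hXb : ∀ i, Bornology.IsBounded (X i) := fun i => (h𝒵 _ (hX i)).2.2
  refine ⟨?_, fun z hz => ?_⟩
  · refine squeeze_zero (fun n => ?_) (fun n => ?_) hco.1
    · refine Real.sSup_nonneg ?_
      rintro _ ⟨a, -, rfl⟩
      exact infDist_nonneg
    · refine csSup_le_csSup (bddAbove_infDist ?_ hCne) ?_ ?_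
      · exact (bounded_avg (fun i => (isBounded_convexHull.2 (hXb i)).closure) n).closure
      · choose g hg using hXne
        exact (Set.Nonempty.closure ⟨_, mem_avg.2 ⟨g, fun i _ => hg i, rfl⟩⟩).image _
      · refine Set.image_mono (closure_mono fun x hx => ?_)
        obtain ⟨g, hg, rfl⟩ := mem_avg.1 hx
        exact mem_avg.2 ⟨g, fun i hi => subset_closure (subset_convexHull ℝ _ (hg i hi)), rfl⟩
  · rw [Metric.tendsto_nhds]
    intro ε hε
    filter_upwards [pt_conv 𝒵 h𝒵 h𝒵c X hX z (hco.2 z hz) (show 0 < ε / 6 by positivity)] with n hn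
    rw [Real.dist_0_eq_abs, abs_of_nonneg infDist_nonneg]
    linarith
end

section
/- Let E be a real Banach space, let 𝒵 ⊆ ℭ(E) be nonempty and compact in the Pompeiu–Hausdorff metric h, let {X_n} be a sequence with X_n ∈ 𝒵 for all n, and let C ∈ ℭ_c(E) be compact and convex. If the closures of (co̅X₁ + … + co̅X_n)/n Fisher-converge to C as n → ∞, where co̅X denotes the closed convex hull of X, then the closures of (X₁ + … + X_n)/n converge to C in the Pompeiu–Hausdorff metric as n → ∞. -/
open Metric Filter Topology Pointwise

variable {E : Type*} [NormedAddCommGroup E] [NormedSpace ℝ E] [CompleteSpace E]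

/-- Two sets are `r`-close. -/
def NearSets (r : ℝ) (A B : Set E) : Prop :=
  (∀ a ∈ A, ∃ b ∈ B, dist a b < r) ∧ (∀ b ∈ B, ∃ a ∈ A, dist a b < r)

lemma aux_infDist_le_excess {A B : Set E} (hA : Bornology.IsBounded A) (hB : B.Nonempty)
    {a : E} (ha : a ∈ A) : infDist a B ≤ excess A B := by
  obtain ⟨b, hb⟩ := hB
  obtain ⟨R, hR⟩ := hA.subset_closedBall b
  refine le_csSup ⟨R, ?_⟩ (Set.mem_image_of_mem _ ha)
  rintro _ ⟨x, hx, rfl⟩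
  exact (infDist_le_dist_of_mem hb).trans (by simpa using hR hx)

lemma aux_excess_nonneg (A B : Set E) : 0 ≤ excess A B := by
  apply Real.sSup_nonneg
  rintro _ ⟨x, hx, rfl⟩
  exact infDist_nonneg

lemma aux_excess_le {A B : Set E} {r : ℝ} (hr : 0 ≤ r) (h : ∀ a ∈ A, infDist a B ≤ r) :
    excess A B ≤ r := by
  apply Real.sSup_le _ hr
  rintro _ ⟨x, hx, rfl⟩
  exact h x hx

lemma aux_near_of_hdist {A B : Set E} (hA : Bornology.IsBounded A) (hB : Bornology.IsBounded B)
    (hA' : A.Nonempty) (hB' : B.Nonempty) {r : ℝ} (h : hdist A B < r) : NearSets r A B := by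
  have h1 : excess A B < r := lt_of_le_of_lt (le_max_left _ _) h
  have h2 : excess B A < r := lt_of_le_of_lt (le_max_right _ _) h
  constructor
  · intro a ha
    exact (infDist_lt_iff hB').1 ((aux_infDist_le_excess hA hB' ha).trans_lt h1)
  · intro b hb
    obtain ⟨a, ha, hab⟩ := (infDist_lt_iff hA').1 ((aux_infDist_le_excess hB hA' hb).trans_lt h2)
    exact ⟨a, ha, by rwa [dist_comm]⟩

lemma aux_near_join {A B W : Set E} {r : ℝ} (h1 : NearSets (r / 2) A W)
    (h2 : NearSets (r / 2) B W) : NearSets r A B := by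
  constructor
  · intro a ha
    obtain ⟨w, hw, h⟩ := h1.1 a ha
    obtain ⟨b, hb, h'⟩ := h2.2 w hw
    refine ⟨b, hb, ?_⟩
    have := dist_triangle_right a b w
    linarith
  · intro b hb
    obtain ⟨w, hw, h⟩ := h2.1 b hb
    obtain ⟨a, ha, h'⟩ := h1.2 w hw
    refine ⟨a, ha, ?_⟩
    have := dist_triangle_right a b w
    linarith

lemma aux_net (𝒵 : Set (Set E))
    (h𝒵 : ∀ A ∈ 𝒵, A.Nonempty ∧ IsClosed A ∧ Bornology.IsBounded A)
    (h𝒵c : HCompact 𝒵) {r : ℝ} (hr : 0 < r) :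
    ∃ s : Finset (Set E), (∀ x ∈ s, x ∈ 𝒵) ∧ ∀ y ∈ 𝒵, ∃ x ∈ s, NearSets r x y := by
  by_contra! hcon
  obtain ⟨f, hf, hf2⟩ := exists_seq_of_forall_finset_exists (fun x => x ∈ 𝒵)
    (fun x y => ¬ NearSets r x y) hcon
  obtain ⟨W, hW, φ, hφ, hlim⟩ := h𝒵c f hf
  have hev : ∀ᶠ k in atTop, hdist (f (φ k)) W < r / 2 :=
    hlim.eventually (gt_mem_nhds (by linarith))
  obtain ⟨N, hN⟩ := eventually_atTop.1 hev
  have key : ∀ k ≥ N, NearSets (r / 2) (f (φ k)) W := fun k hk =>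
    aux_near_of_hdist (h𝒵 _ (hf _)).2.2 (h𝒵 _ hW).2.2 (h𝒵 _ (hf _)).1 (h𝒵 _ hW).1 (hN k hk)
  exact hf2 (φ N) (φ (N + 1)) (hφ (Nat.lt_succ_self N))
    (aux_near_join (key N le_rfl) (key (N + 1) (Nat.le_succ N)))

/-- Bounded discrepancy for points of the convex hull. -/
lemma aux_discrepancy (A : Set E) (c : E) (hc : c ∈ convexHull ℝ A) :
    ∃ K : ℝ, ∀ s : Finset ℕ, ∃ a : ℕ → E, (∀ i, a i ∈ A) ∧
      ‖∑ i ∈ s, a i - (s.card : ℝ) • c‖ ≤ K := by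
  classical
  let D : Set E := {c | ∃ K : ℝ, ∀ s : Finset ℕ, ∃ a : ℕ → E, (∀ i, a i ∈ A) ∧
      ‖∑ i ∈ s, a i - (s.card : ℝ) • c‖ ≤ K}
  have hAD : A ⊆ D := by
    intro x hx
    refine ⟨0, fun s => ⟨fun _ => x, fun _ => hx, ?_⟩⟩
    simp [← Nat.cast_smul_eq_nsmul ℝ]
  have hD : Convex ℝ D := by
    rintro x ⟨K, hK⟩ y ⟨L, hL⟩ α β hα hβ hαβ
    refine ⟨K + L + ‖x - y‖, fun s => ?_⟩
    have hle : ⌊α * s.card⌋₊ ≤ s.card := by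
      apply Nat.floor_le_of_le
      have : (0 : ℝ) ≤ s.card := Nat.cast_nonneg _
      nlinarith
    obtain ⟨t, hts, htc⟩ := Finset.exists_subset_card_eq hle
    obtain ⟨a, haA, ha⟩ := hK t
    obtain ⟨b, hbA, hb⟩ := hL (s \ t)
    refine ⟨fun i => if i ∈ t then a i else b i, fun i => ?_, ?_⟩
    · dsimp only
      split_ifs
      · exact haA i
      · exact hbA i
    have h1 : ∑ i ∈ s, (if i ∈ t then a i else b i) = ∑ i ∈ t, a i + ∑ i ∈ s \ t, b i := by
      rw [← Finset.sum_sdiff hts, add_comm]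
      congr 1
      · exact Finset.sum_congr rfl fun i hi => by simp [hi]
      · exact Finset.sum_congr rfl fun i hi => by simp [(Finset.mem_sdiff.1 hi).2]
    have h2 : ((s \ t).card : ℝ) = s.card - t.card := by
      rw [Finset.card_sdiff_of_subset hts, Nat.cast_sub (Finset.card_le_card hts)]
    have h3 : |(t.card : ℝ) - α * s.card| ≤ 1 := by
      rw [htc, abs_le]
      have h4 := Nat.floor_le (a := α * s.card) (by positivity)
      have h5 := Nat.lt_floor_add_one (α * (s.card : ℝ))
      constructor <;> linarith
    rw [h1]
    have h6 : ∑ i ∈ t, a i + ∑ i ∈ s \ t, b i - (s.card : ℝ) • (α • x + β • y)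
        = (∑ i ∈ t, a i - (t.card : ℝ) • x) + (∑ i ∈ s \ t, b i - ((s \ t).card : ℝ) • y)
          + ((t.card : ℝ) - α * s.card) • (x - y) := by
      have : β = 1 - α := by linarith
      rw [h2, this]
      module
    rw [h6]
    refine (norm_add₃_le).trans ?_
    rw [norm_smul, Real.norm_eq_abs]
    have := mul_le_mul_of_nonneg_right h3 (norm_nonneg (x - y))
    linarith
  exact convexHull_min hAD hD hc

lemma aux_mean {T : Set E} (hT : Convex ℝ T) (hne : T.Nonempty) (s : Finset ℕ) (w : ℕ → E)
    (hw : ∀ i ∈ s, w i ∈ T) : ∃ c ∈ T, ∑ i ∈ s, w i = (s.card : ℝ) • c := by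
  rcases s.eq_empty_or_nonempty with rfl | hs
  · obtain ⟨c, hc⟩ := hne
    exact ⟨c, hc, by simp⟩
  · have hpos : (0 : ℝ) < s.card := by exact_mod_cast hs.card_pos
    refine ⟨∑ i ∈ s, (s.card : ℝ)⁻¹ • w i, hT.sum_mem (fun _ _ => by positivity) ?_ hw, ?_⟩
    · simp [hpos.ne']
    · rw [← Finset.smul_sum, smul_smul, mul_inv_cancel₀ hpos.ne', one_smul]

/-- Frequency of class `j`. -/
noncomputable def freqs {ι : Type*} [DecidableEq ι] (j : ℕ → ι) (n : ℕ) (k : ι) : ℝ :=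
  ((n : ℝ) + 1)⁻¹ * (((Finset.range (n + 1)).filter (fun i => j i = k)).card : ℝ)

lemma aux_core {ι : Type*} [Fintype ι] [DecidableEq ι] (j : ℕ → ι) (Z : ι → Set E)
    (hZne : ∀ k, (Z k).Nonempty) (X : ℕ → Set E) {r M : ℝ} (hr : 0 < r) (hM : 0 ≤ M)
    (hZM : ∀ k, Z k ⊆ closedBall 0 M)
    (hnear : ∀ i, NearSets r (Z (j i)) (X i)) (z : E) (m : ℕ)
    (hm : infDist z (closure ((((m : ℝ) + 1))⁻¹ •
        ∑ i ∈ Finset.range (m + 1), closure (convexHull ℝ (X i)))) < r) :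
    ∀ᶠ n : ℕ in atTop, dist (freqs j n) (freqs j m) < r / (Fintype.card ι * M + 1) →
      infDist z (closure ((((n : ℝ) + 1))⁻¹ • ∑ i ∈ Finset.range (n + 1), X i)) ≤ 6 * r := by
  have hXne : ∀ i, (X i).Nonempty := fun i => by
    obtain ⟨a, ha⟩ := hZne (j i)
    obtain ⟨b, hb, -⟩ := (hnear i).1 a ha
    exact ⟨b, hb⟩
  rw [infDist_closure] at hm
  have hne : ((((m : ℝ) + 1))⁻¹ •
        ∑ i ∈ Finset.range (m + 1), closure (convexHull ℝ (X i))).Nonempty := by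
    choose x hx using hXne
    refine Set.Nonempty.smul_set ⟨∑ i ∈ Finset.range (m + 1), x i, ?_⟩
    rw [Set.mem_finset_sum]
    exact ⟨x, fun _ => subset_closure (subset_convexHull ℝ _ (hx _)), rfl⟩
  obtain ⟨p, hp, hzp⟩ := (infDist_lt_iff hne).1 hm
  obtain ⟨q, hq, rfl⟩ := Set.mem_smul_set.1 hp
  rw [Set.mem_finset_sum] at hq
  obtain ⟨y, hy, rfl⟩ := hq
  have hw : ∀ i, ∃ w ∈ convexHull ℝ (Z (j i)), i ∈ Finset.range (m + 1) →
      dist (y i) w < 2 * r := by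
    intro i
    by_cases hi : i ∈ Finset.range (m + 1)
    · have h1 : convexHull ℝ (X i) ⊆ thickening r (convexHull ℝ (Z (j i))) := by
        apply convexHull_min _ ((convex_convexHull ℝ _).thickening r)
        intro x hx
        obtain ⟨a, ha, hax⟩ := (hnear i).2 x hx
        exact mem_thickening_iff.2 ⟨a, subset_convexHull ℝ _ ha, by rwa [dist_comm]⟩
      have h2 : y i ∈ thickening (2 * r) (convexHull ℝ (Z (j i))) :=
        cthickening_subset_thickening' (by linarith) (by linarith) _
          (closure_thickening_subset_cthickening _ _ (closure_mono h1 (hy hi)))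
      obtain ⟨w, hw, h⟩ := mem_thickening_iff.1 h2
      exact ⟨w, hw, fun _ => h⟩
    · obtain ⟨a, ha⟩ := hZne (j i)
      exact ⟨a, subset_convexHull ℝ _ ha, fun h => absurd h hi⟩
  choose w hwZ hyw using hw
  have hc : ∀ k, ∃ c ∈ convexHull ℝ (Z k),
      ∑ i ∈ (Finset.range (m + 1)).filter (fun i => j i = k), w i
        = (((Finset.range (m + 1)).filter (fun i => j i = k)).card : ℝ) • c := by
    intro k
    apply aux_mean (convex_convexHull ℝ _) ((hZne k).convexHull)
    intro i hi
    rw [← (Finset.mem_filter.1 hi).2]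
    exact hwZ i
  choose c hcZ hcw using hc
  have hcM : ∀ k, ‖c k‖ ≤ M := fun k => by
    have := convexHull_min (hZM k) (convex_closedBall 0 M) (hcZ k)
    simpa using this
  choose K hK using fun k => aux_discrepancy (Z k) (c k) (hcZ k)
  have hlim : Tendsto (fun n : ℕ => ((n : ℝ) + 1)⁻¹ * ∑ k, K k) atTop (𝓝 0) := by
    have := (tendsto_one_div_add_atTop_nhds_zero_nat (𝕜 := ℝ)).mul_const (∑ k, K k)
    simpa using this
  filter_upwards [hlim.eventually (gt_mem_nhds hr)] with n hn hdist
  choose a haZ ha using fun k => hK k ((Finset.range (n + 1)).filter (fun i => j i = k))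
  choose x hxX hx using fun i => (hnear i).1 (a (j i) i) (haZ _ _)
  have hnp : (0 : ℝ) < (n : ℝ) + 1 := by positivity
  have hmp : (0 : ℝ) < (m : ℝ) + 1 := by positivity
  rw [infDist_closure]
  have hmem : ((n : ℝ) + 1)⁻¹ • ∑ i ∈ Finset.range (n + 1), x i ∈
      (((n : ℝ) + 1))⁻¹ • ∑ i ∈ Finset.range (n + 1), X i := by
    apply Set.smul_mem_smul_set
    rw [Set.mem_finset_sum]
    exact ⟨x, fun _ => hxX _, rfl⟩
  refine (infDist_le_dist_of_mem hmem).trans ?_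
  have avg : ∀ (N : ℕ) (u v : ℕ → E) (ρ : ℝ),
      (∀ i ∈ Finset.range (N + 1), dist (u i) (v i) ≤ ρ) →
      dist (((N : ℝ) + 1)⁻¹ • ∑ i ∈ Finset.range (N + 1), u i)
        (((N : ℝ) + 1)⁻¹ • ∑ i ∈ Finset.range (N + 1), v i) ≤ ρ := by
    intro N u v ρ h
    have hNp : (0 : ℝ) < (N : ℝ) + 1 := by positivity
    rw [dist_smul₀, Real.norm_of_nonneg (by positivity), inv_mul_le_iff₀ hNp]
    refine (dist_sum_sum_le_of_le _ h).trans ?_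
    simp
  have e1 := avg m y w (2 * r) (fun i hi => (hyw i hi).le)
  have e2 := avg n (fun i => a (j i) i) x r (fun i _ => (hx i).le)
  have fib : ∀ (N : ℕ) (u : ℕ → E), ∑ i ∈ Finset.range (N + 1), u i =
      ∑ k, ∑ i ∈ (Finset.range (N + 1)).filter (fun i => j i = k), u i := fun N u =>
    (Finset.sum_fiberwise _ _ _).symm
  have e3 : ((m : ℝ) + 1)⁻¹ • ∑ i ∈ Finset.range (m + 1), w i = ∑ k, freqs j m k • c k := by
    rw [fib, Finset.smul_sum]
    refine Finset.sum_congr rfl fun k _ => ?_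
    rw [hcw, smul_smul, freqs]
  have e4 : dist (∑ k, freqs j m k • c k) (∑ k, freqs j n k • c k) ≤ r := by
    have h1 : ∀ k ∈ (Finset.univ : Finset ι), dist (freqs j m k • c k) (freqs j n k • c k) ≤
        r / (Fintype.card ι * M + 1) * M := by
      intro k _
      rw [dist_eq_norm, ← sub_smul, norm_smul, ← dist_eq_norm, dist_comm]
      exact mul_le_mul ((dist_le_pi_dist _ _ k).trans hdist.le) (hcM k) (norm_nonneg _)
        (by positivity)
    refine (dist_sum_sum_le_of_le _ h1).trans ?_
    rw [Finset.sum_const, nsmul_eq_mul, Finset.card_univ]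
    have h2 : (0 : ℝ) < Fintype.card ι * M + 1 := by positivity
    have h3 : (Fintype.card ι : ℝ) * (r / (Fintype.card ι * M + 1) * M)
      = r * (Fintype.card ι * M) / (Fintype.card ι * M + 1) := by ring
    rw [h3, div_le_iff₀ h2]
    nlinarith
  have e5 : dist (∑ k, freqs j n k • c k)
      (((n : ℝ) + 1)⁻¹ • ∑ i ∈ Finset.range (n + 1), a (j i) i) ≤ r := by
    have h0 : ∑ k, freqs j n k • c k = ((n : ℝ) + 1)⁻¹ • ∑ k,
        (((Finset.range (n + 1)).filter (fun i => j i = k)).card : ℝ) • c k := by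
      rw [Finset.smul_sum]
      exact Finset.sum_congr rfl fun k _ => by rw [smul_smul, freqs]
    rw [h0, dist_smul₀, Real.norm_of_nonneg (by positivity), fib]
    refine le_trans (mul_le_mul_of_nonneg_left ?_ (by positivity)) hn.le
    apply dist_sum_sum_le_of_le
    intro k _
    rw [dist_comm, dist_eq_norm]
    refine le_of_eq_of_le ?_ (ha k)
    congr 2
    exact Finset.sum_congr rfl fun i hi => by rw [(Finset.mem_filter.1 hi).2]
  rw [e3] at e1
  have t1 := dist_triangle z (((m : ℝ) + 1)⁻¹ • ∑ i ∈ Finset.range (m + 1), y i)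
    (((n : ℝ) + 1)⁻¹ • ∑ i ∈ Finset.range (n + 1), x i)
  have t2 := dist_triangle (((m : ℝ) + 1)⁻¹ • ∑ i ∈ Finset.range (m + 1), y i)
    (∑ k, freqs j m k • c k) (((n : ℝ) + 1)⁻¹ • ∑ i ∈ Finset.range (n + 1), x i)
  have t3 := dist_triangle (∑ k, freqs j m k • c k) (∑ k, freqs j n k • c k)
    (((n : ℝ) + 1)⁻¹ • ∑ i ∈ Finset.range (n + 1), x i)
  have t4 := dist_triangle (∑ k, freqs j n k • c k)
    (((n : ℝ) + 1)⁻¹ • ∑ i ∈ Finset.range (n + 1), a (j i) i)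
    (((n : ℝ) + 1)⁻¹ • ∑ i ∈ Finset.range (n + 1), x i)
  linarith

lemma aux_freqs_mem {ι : Type*} [Fintype ι] [DecidableEq ι] (j : ℕ → ι) (n : ℕ) :
    freqs j n ∈ Set.Icc (0 : ι → ℝ) 1 := by
  have hnp : (0 : ℝ) < (n : ℝ) + 1 := by positivity
  constructor
  · intro k
    simp only [freqs, Pi.zero_apply]
    positivity
  · intro k
    simp only [freqs, Pi.one_apply]
    rw [inv_mul_le_iff₀ hnp, mul_one]
    have := Finset.card_filter_le (Finset.range (n + 1)) (fun i => j i = k)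
    rw [Finset.card_range] at this
    exact_mod_cast this

lemma aux_point (𝒵 : Set (Set E))
    (h𝒵 : ∀ A ∈ 𝒵, A.Nonempty ∧ IsClosed A ∧ Bornology.IsBounded A)
    (h𝒵c : HCompact 𝒵) (X : ℕ → Set E) (hX : ∀ n, X n ∈ 𝒵) (z : E)
    (hz : Tendsto (fun n : ℕ => infDist z (closure ((((n : ℝ) + 1))⁻¹ •
        ∑ i ∈ Finset.range (n + 1), closure (convexHull ℝ (X i))))) atTop (𝓝 0))
    {r : ℝ} (hr : 0 < r) : ∀ᶠ n : ℕ in atTop,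
      infDist z (closure ((((n : ℝ) + 1))⁻¹ • ∑ i ∈ Finset.range (n + 1), X i)) ≤ 6 * r := by
  classical
  obtain ⟨s, hs, hnet⟩ := aux_net 𝒵 h𝒵 h𝒵c hr
  choose j hjs hj using fun i => hnet (X i) (hX i)
  have hbd : Bornology.IsBounded (⋃ A ∈ s, A) :=
    (Bornology.isBounded_biUnion_finset s).2 fun A hA => (h𝒵 A (hs A hA)).2.2
  obtain ⟨M, hM⟩ := hbd.subset_closedBall 0
  let J : ℕ → s := fun i => ⟨j i, hjs i⟩
  have hZM : ∀ k : s, (k : Set E) ⊆ closedBall 0 (max M 0) := fun k x hx =>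
    closedBall_subset_closedBall (le_max_left _ _) (hM (Set.mem_biUnion k.2 hx))
  obtain ⟨N, hN⟩ := eventually_atTop.1 (hz.eventually (gt_mem_nhds hr))
  have hcore := fun m (hm : m ≥ N) => aux_core J (fun k : s => (k : Set E))
    (fun k => (h𝒵 _ (hs _ k.2)).1) X hr (le_max_right M 0) hZM hj z m (hN m hm)
  have htb : TotallyBounded (freqs J '' Set.Ici N) := by
    refine TotallyBounded.subset ?_ (isCompact_Icc (a := (0 : s → ℝ)) (b := 1)).totallyBounded
    rintro _ ⟨n, -, rfl⟩
    exact aux_freqs_mem J n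
  have hδ : 0 < r / (Fintype.card s * max M 0 + 1) := by positivity
  obtain ⟨t, htS, htf, hcov⟩ := finite_approx_of_totallyBounded htb _ hδ
  have hall : ∀ᶠ n : ℕ in atTop, ∀ y ∈ t, dist (freqs J n) y < r / (Fintype.card s * max M 0 + 1) →
      infDist z (closure ((((n : ℝ) + 1))⁻¹ • ∑ i ∈ Finset.range (n + 1), X i)) ≤ 6 * r := by
    rw [htf.eventually_all]
    intro y hy
    obtain ⟨m, hm, rfl⟩ := htS hy
    exact hcore m hm
  filter_upwards [hall, eventually_ge_atTop N] with n hn hnN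
  obtain ⟨y, hy, hyn⟩ := Set.mem_iUnion₂.1 (hcov (Set.mem_image_of_mem _ hnN))
  exact hn y hy hyn

lemma aux_sum_bdd (s : Finset ℕ) (A : ℕ → Set E) (h : ∀ i, Bornology.IsBounded (A i)) :
    Bornology.IsBounded (∑ i ∈ s, A i) := by
  classical
  induction s using Finset.induction_on with
  | empty => simp [← Set.singleton_zero]
  | insert a s ha ih => rw [Finset.sum_insert ha]; exact (h a).add ih

/-- Theorem 4.2: let `𝒵 ⊆ ℭ(E)` be nonempty and compact in the Pompeiu–Hausdorff
metric, `Xₙ ∈ 𝒵` for all `n`, and let `C ∈ ℭ_c(E)` be compact and convex. If the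
closures of `(co̅X₁ + ⋯ + co̅Xₙ)/n` Fisher-converge to `C`, then the closures of
`(X₁ + ⋯ + Xₙ)/n` converge to `C` in the Pompeiu–Hausdorff metric. -/
theorem hConv_of_fisherConv_convexified (𝒵 : Set (Set E)) (h𝒵ne : 𝒵.Nonempty)
    (h𝒵 : ∀ A ∈ 𝒵, A.Nonempty ∧ IsClosed A ∧ Bornology.IsBounded A)
    (h𝒵c : HCompact 𝒵)
    (X : ℕ → Set E) (hX : ∀ n, X n ∈ 𝒵)
    (C : Set E) (hCne : C.Nonempty) (hCcl : IsClosed C)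
    (hCbd : Bornology.IsBounded C) (hCcv : Convex ℝ C) (hCk : IsCompact C)
    (hco : FisherConv
      (fun n => closure ((((n : ℝ) + 1))⁻¹ •
        ∑ i ∈ Finset.range (n + 1), closure (convexHull ℝ (X i)))) C) :
    Tendsto
      (fun n : ℕ => hdist (closure ((((n : ℝ) + 1))⁻¹ • ∑ i ∈ Finset.range (n + 1), X i)) C)
      atTop (𝓝 0) := by
  have bd : ∀ n : ℕ, Bornology.IsBounded (closure ((((n : ℝ) + 1))⁻¹ •
        ∑ i ∈ Finset.range (n + 1), closure (convexHull ℝ (X i)))) := fun n =>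
    ((aux_sum_bdd _ _ fun i =>
      (isBounded_convexHull.2 (h𝒵 _ (hX i)).2.2).closure).smul₀ _).closure
  have sub : ∀ n : ℕ, closure ((((n : ℝ) + 1))⁻¹ • ∑ i ∈ Finset.range (n + 1), X i) ⊆
      closure ((((n : ℝ) + 1))⁻¹ •
        ∑ i ∈ Finset.range (n + 1), closure (convexHull ℝ (X i))) := fun n =>
    closure_mono (Set.smul_set_mono (Set.finset_sum_subset_finset_sum _ _ _ fun i _ =>
      (subset_convexHull ℝ _).trans subset_closure))
  rw [Metric.tendsto_nhds]
  intro ε hε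
  have hr : 0 < ε / 14 := by positivity
  obtain ⟨t, htC, htf, hcov⟩ := finite_approx_of_totallyBounded hCk.totallyBounded _ hr
  have hall : ∀ᶠ n : ℕ in atTop, ∀ z ∈ t, infDist z
      (closure ((((n : ℝ) + 1))⁻¹ • ∑ i ∈ Finset.range (n + 1), X i)) ≤ 6 * (ε / 14) := by
    rw [htf.eventually_all]
    intro z hz
    exact aux_point 𝒵 h𝒵 h𝒵c X hX z (hco.2 z (htC hz)) hr
  filter_upwards [hall, hco.1.eventually (gt_mem_nhds (half_pos hε))] with n hn hn2
  have h0 : 0 ≤ hdist (closure ((((n : ℝ) + 1))⁻¹ • ∑ i ∈ Finset.range (n + 1), X i)) C :=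
    (aux_excess_nonneg _ _).trans (le_max_left _ _)
  rw [Real.dist_eq, sub_zero, abs_of_nonneg h0]
  refine lt_of_le_of_lt (max_le ?_ ?_) (half_lt_self hε)
  · refine aux_excess_le (by positivity) fun a ha => ?_
    exact (aux_infDist_le_excess (bd n) hCne (sub n ha)).trans hn2.le
  · refine aux_excess_le (by positivity) fun a ha => ?_
    obtain ⟨z, hz, haz⟩ := Set.mem_iUnion₂.1 (hcov ha)
    have h1 := infDist_le_infDist_add_dist (x := a) (y := z)
      (s := closure ((((n : ℝ) + 1))⁻¹ • ∑ i ∈ Finset.range (n + 1), X i))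
    have h2 := hn z hz
    have h3 := mem_ball.1 haz
    linarith
end

section
/- Let E be a real Banach space and let A, C, Z be nonempty subsets of E with C convex and Z bounded. If the closure of the Minkowski sum A + Z is contained in the closure of C + Z, then A is contained in the closure of C. -/
open Pointwise

/-- Proposition 6.2 (Rådström cancellation): if `A, C, Z` are nonempty subsets of a real
Banach space with `C` convex and `Z` bounded, and `closure (A + Z) ⊆ closure (C + Z)`,
then `A ⊆ closure C`. -/
theorem radstrom_cancellation {E : Type*} [NormedAddCommGroup E] [NormedSpace ℝ E]
    [CompleteSpace E]
    (A C Z : Set E) (hA : A.Nonempty) (hC : C.Nonempty) (hZ : Z.Nonempty)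
    (hCcv : Convex ℝ C) (hZbd : Bornology.IsBounded Z)
    (h : closure (A + Z) ⊆ closure (C + Z)) :
    A ⊆ closure C := by
  intro a ha
  by_contra hac
  obtain ⟨f, u, hfa, hfu⟩ := geometric_hahn_banach_point_closed hCcv.closure isClosed_closure hac
  obtain ⟨R, hR⟩ := hZbd.exists_norm_le
  have hbdd : BddBelow (f '' Z) := by
    refine ⟨-(‖f‖ * R), ?_⟩
    rintro _ ⟨z, hz, rfl⟩
    have h1 := f.le_opNorm z
    have h2 : ‖f‖ * ‖z‖ ≤ ‖f‖ * R := mul_le_mul_of_nonneg_left (hR z hz) (norm_nonneg f)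
    have h3 := neg_abs_le (f z)
    rw [Real.norm_eq_abs] at h1
    linarith
  have hsub : closure (C + Z) ⊆ {x | u + sInf (f '' Z) ≤ f x} := by
    refine closure_minimal ?_ (isClosed_le continuous_const f.continuous)
    rintro _ ⟨c, hc, z, hz, rfl⟩
    have h1 := hfu c (subset_closure hc)
    have h2 := csInf_le hbdd (Set.mem_image_of_mem f hz)
    simp only [Set.mem_setOf_eq, map_add]
    linarith
  have hle : u + sInf (f '' Z) - f a ≤ sInf (f '' Z) := by
    refine le_csInf (hZ.image f) ?_
    rintro _ ⟨z, hz, rfl⟩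
    have h1 := hsub (h (subset_closure (Set.add_mem_add ha hz)))
    simp only [Set.mem_setOf_eq, map_add] at h1
    linarith
  linarith
end

section
/- (Rådström embedding.) Let E be a real Banach space. There exist a real Banach space F and a map J : ℭ_c(E) → F such that: (i) J(λX +̇ μY) = λ J(X) + μ J(Y) for every X, Y ∈ ℭ_c(E) and λ, μ ≥ 0, where X +̇ Y denotes the closure of the Minkowski sum; (ii) ‖J(X) − J(Y)‖ = h(X, Y) for every X, Y ∈ ℭ_c(E); (iii) the image J(ℭ_c(E)) is a convex cone in F which is complete (closed) under the metric induced by the norm of F. -/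
open Metric Pointwise

universe u

variable {E : Type u} [NormedAddCommGroup E] [NormedSpace ℝ E] [CompleteSpace E]

open Filter Topology

set_option linter.unusedSectionVars false

theorem rad_bdd {X : Set E} (hX : IsCBC X) (f : StrongDual ℝ E) : BddAbove (f '' X) := by
  obtain ⟨R, hR⟩ := hX.2.2.1.exists_norm_le
  refine ⟨‖f‖ * R, ?_⟩
  rintro _ ⟨x, hx, rfl⟩
  calc f x ≤ ‖f x‖ := Real.le_norm_self _
    _ ≤ ‖f‖ * ‖x‖ := f.le_opNorm x
    _ ≤ ‖f‖ * R := by gcongr; exact hR x hx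

theorem rad_le {X : Set E} (hX : IsCBC X) (f : StrongDual ℝ E) {x : E} (hx : x ∈ X) :
    f x ≤ sSup (f '' X) := le_csSup (rad_bdd hX f) ⟨x, hx, rfl⟩

theorem rad_sup_le {X : Set E} (hX : IsCBC X) (f : StrongDual ℝ E) {c : ℝ}
    (h : ∀ x ∈ X, f x ≤ c) : sSup (f '' X) ≤ c := by
  apply csSup_le (hX.1.image _)
  rintro _ ⟨x, hx, rfl⟩
  exact h x hx

theorem rad_cbc {X Y : Set E} (hX : IsCBC X) (hY : IsCBC Y) (a b : ℝ) :
    IsCBC (closure (a • X + b • Y)) := by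
  refine ⟨?_, isClosed_closure, ?_, ?_⟩
  · exact ((hX.1.smul_set).add (hY.1.smul_set)).closure
  · exact ((hX.2.2.1.smul₀ a).add (hY.2.2.1.smul₀ b)).closure
  · exact ((hX.2.2.2.smul a).add (hY.2.2.2.smul b)).closure

theorem rad_sup_add {X Y : Set E} (hX : IsCBC X) (hY : IsCBC Y) {a b : ℝ} (ha : 0 ≤ a)
    (hb : 0 ≤ b) (f : StrongDual ℝ E) :
    sSup (f '' closure (a • X + b • Y)) = a * sSup (f '' X) + b * sSup (f '' Y) := by
  apply le_antisymm
  · apply rad_sup_le (rad_cbc hX hY a b)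
    have hc : IsClosed {z : E | f z ≤ a * sSup (f '' X) + b * sSup (f '' Y)} :=
      isClosed_le f.continuous continuous_const
    refine fun z hz => closure_minimal ?_ hc hz
    rintro _ ⟨_, ⟨x, hx, rfl⟩, _, ⟨y, hy, rfl⟩, rfl⟩
    have h1 := mul_le_mul_of_nonneg_left (rad_le hX f hx) ha
    have h2 := mul_le_mul_of_nonneg_left (rad_le hY f hy) hb
    simp only [Set.mem_ofPred_eq, map_add, map_smul, smul_eq_mul]
    linarith
  · have e : f '' (a • X + b • Y) = a • (f '' X) + b • (f '' Y) := by
      rw [Set.image_add, image_smul_set, image_smul_set]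
    have h1 : BddAbove (a • (f '' X)) := (rad_bdd hX f).smul_of_nonneg ha
    have h2 : BddAbove (b • (f '' Y)) := (rad_bdd hY f).smul_of_nonneg hb
    have h3 : sSup (f '' (a • X + b • Y)) = a * sSup (f '' X) + b * sSup (f '' Y) := by
      rw [e, csSup_add ((hX.1.image f).smul_set) h1 ((hY.1.image f).smul_set) h2,
        Real.sSup_smul_of_nonneg ha, Real.sSup_smul_of_nonneg hb, smul_eq_mul, smul_eq_mul]
    rw [← h3]
    exact csSup_le_csSup (rad_bdd (rad_cbc hX hY a b) f)
      (((hX.1.smul_set).add (hY.1.smul_set)).image f) (Set.image_mono subset_closure)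

theorem rad_fin {X Y : Set E} (hX : IsCBC X) (hY : IsCBC Y) : hausdorffEDist X Y ≠ ⊤ :=
  hausdorffEDist_ne_top_of_nonempty_of_bounded hX.1 hY.1 hX.2.2.1 hY.2.2.1

theorem rad_exc_bdd {X Y : Set E} (hX : IsCBC X) (hY : IsCBC Y) :
    BddAbove ((fun a => infDist a Y) '' X) := by
  refine ⟨hausdorffDist X Y, ?_⟩
  rintro _ ⟨x, hx, rfl⟩
  exact infDist_le_hausdorffDist_of_mem hx (rad_fin hX hY)

theorem rad_exc_le {X Y : Set E} (hX : IsCBC X) {c : ℝ}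
    (h : ∀ x ∈ X, infDist x Y ≤ c) : excess X Y ≤ c := by
  apply csSup_le (hX.1.image _)
  rintro _ ⟨x, hx, rfl⟩
  exact h x hx

theorem rad_le_exc {X Y : Set E} (hX : IsCBC X) (hY : IsCBC Y) {x : E} (hx : x ∈ X) :
    infDist x Y ≤ excess X Y := le_csSup (rad_exc_bdd hX hY) ⟨x, hx, rfl⟩

theorem rad_hdist {X Y : Set E} (hX : IsCBC X) (hY : IsCBC Y) :
    hdist X Y = hausdorffDist X Y := by
  apply le_antisymm
  · apply max_le
    · exact rad_exc_le hX fun x hx => infDist_le_hausdorffDist_of_mem hx (rad_fin hX hY)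
    · rw [hausdorffDist_comm]
      exact rad_exc_le hY fun x hx => infDist_le_hausdorffDist_of_mem hx (rad_fin hY hX)
  · obtain ⟨x, hx⟩ := hX.1
    apply hausdorffDist_le_of_infDist
    · exact infDist_nonneg.trans ((rad_le_exc hX hY hx).trans (le_max_left _ _))
    · exact fun x hx => (rad_le_exc hX hY hx).trans (le_max_left _ _)
    · exact fun x hx => (rad_le_exc hY hX hx).trans (le_max_right _ _)

/-- support functions differ by at most the excess on the unit ball -/
theorem rad_sup_sub {X Y : Set E} (hX : IsCBC X) (hY : IsCBC Y) (f : StrongDual ℝ E)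
    (hf : ‖f‖ ≤ 1) : sSup (f '' X) - sSup (f '' Y) ≤ excess X Y := by
  rw [sub_le_iff_le_add]
  apply rad_sup_le hX
  intro x hx
  apply le_of_forall_pos_le_add
  intro ε hε
  obtain ⟨y, hy, hxy⟩ := (infDist_lt_iff hY.1).1 (lt_add_of_pos_right (infDist x Y) hε)
  have h1 := rad_le_exc hX hY hx
  have h2 := rad_le hY f hy
  have h3 : f x - f y ≤ dist x y := by
    rw [← map_sub, dist_eq_norm]
    calc f (x - y) ≤ ‖f (x - y)‖ := Real.le_norm_self _
      _ ≤ ‖f‖ * ‖x - y‖ := f.le_opNorm _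
      _ ≤ 1 * ‖x - y‖ := by gcongr
      _ = _ := one_mul _
  linarith

theorem rad_sep {X Y : Set E} (hX : IsCBC X) (hY : IsCBC Y) {r : ℝ} (hr : 0 ≤ r)
    (h : ∀ f : StrongDual ℝ E, ‖f‖ ≤ 1 → sSup (f '' X) - sSup (f '' Y) ≤ r) :
    excess X Y ≤ r := by
  apply rad_exc_le hX
  intro a ha
  by_contra! hlt
  obtain ⟨t, hrt, ht⟩ := exists_between hlt
  have ht0 : 0 < t := hr.trans_lt hrt
  have hdisj : Disjoint (ball a t) Y := by
    rw [Set.disjoint_left]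
    intro z hz hzY
    have := infDist_le_dist_of_mem (x := a) hzY
    rw [mem_ball, dist_comm] at hz
    linarith
  obtain ⟨f, u, h1, h2⟩ := geometric_hahn_banach_open (convex_ball a t) isOpen_ball
    hY.2.2.2 hdisj
  obtain ⟨y, hy⟩ := hY.1
  have hfa : f a < u := h1 a (mem_ball_self ht0)
  have h3 : ∀ z ∈ closedBall a t, f z ≤ u := by
    rw [← closure_ball a ht0.ne']
    exact fun z hz => closure_minimal (fun z hz => (h1 z hz).le)
      (isClosed_le f.continuous continuous_const) hz
  have hn : ‖f‖ ≤ (u - f a) / t := by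
    apply ContinuousLinearMap.opNorm_le_of_unit_norm
    · exact div_nonneg (by linarith) ht0.le
    · intro x hx
      have e1 := h3 (a + t • x) (by simp [norm_smul, hx, abs_of_pos ht0])
      have e2 := h3 (a - t • x) (by simp [norm_smul, hx, abs_of_pos ht0, dist_eq_norm])
      simp only [map_add, map_sub, map_smul, smul_eq_mul] at e1 e2
      rw [Real.norm_eq_abs, le_div_iff₀ ht0, ← abs_of_pos ht0, ← abs_mul, abs_le]
      constructor <;> linarith
  have hf0 : 0 < ‖f‖ := by
    rw [norm_pos_iff]
    rintro rfl
    have := h2 y hy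
    simp at this hfa
    linarith
  rw [le_div_iff₀ ht0] at hn
  have key := h (-(‖f‖⁻¹ • f)) (by rw [norm_neg, norm_smul, norm_inv, norm_norm, inv_mul_cancel₀ hf0.ne'])
  have k1 := rad_le hX (-(‖f‖⁻¹ • f)) ha
  have k2 : sSup ((-(‖f‖⁻¹ • f) : StrongDual ℝ E) '' Y) ≤ -(‖f‖⁻¹ * f a) - t := by
    apply rad_sup_le hY
    intro z hz
    have := h2 z hz
    have h5 : ‖f‖⁻¹ * (f a + ‖f‖ * t) ≤ ‖f‖⁻¹ * f z := by
      apply mul_le_mul_of_nonneg_left _ (by positivity)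
      linarith
    rw [mul_add, inv_mul_cancel_left₀ hf0.ne'] at h5
    simp
    linarith
  have k3 : (-(‖f‖⁻¹ • f) : StrongDual ℝ E) a = -(‖f‖⁻¹ * f a) := by simp
  rw [k3] at k1
  linarith

abbrev RadB (E : Type u) [NormedAddCommGroup E] [NormedSpace ℝ E] : Type u :=
  {f : StrongDual ℝ E // ‖f‖ ≤ 1}

theorem rad_mem {X : Set E} (hX : IsCBC X) :
    Memℓp (fun f : RadB E => sSup (f.1 '' X)) ⊤ := by
  obtain ⟨R, hR⟩ := hX.2.2.1.exists_norm_le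
  have hb : ∀ f : RadB E, ∀ x ∈ X, |f.1 x| ≤ R := fun f x hx => by
    calc |f.1 x| ≤ ‖f.1‖ * ‖x‖ := f.1.le_opNorm x
      _ ≤ 1 * ‖x‖ := by gcongr; exact f.2
      _ ≤ R := by rw [one_mul]; exact hR x hx
  apply memℓp_infty
  refine ⟨R, ?_⟩
  rintro _ ⟨f, rfl⟩
  obtain ⟨x, hx⟩ := hX.1
  simp only [Real.norm_eq_abs]
  rw [abs_le]
  constructor
  · exact (abs_le.1 (hb f x hx)).1.trans (rad_le hX f.1 hx)
  · exact rad_sup_le hX f.1 fun x hx => (abs_le.1 (hb f x hx)).2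

open Classical in
/-- The embedding by support functions. -/
noncomputable def radJ (X : Set E) : lp (fun _ : RadB E => ℝ) ⊤ :=
  if h : IsCBC X then ⟨fun f => sSup (f.1 '' X), rad_mem h⟩ else 0

theorem radJ_apply {X : Set E} (hX : IsCBC X) (f : RadB E) :
    radJ X f = sSup (f.1 '' X) := by
  rw [radJ, dif_pos hX]

theorem radJ_add {X Y : Set E} (hX : IsCBC X) (hY : IsCBC Y) {a b : ℝ} (ha : 0 ≤ a)
    (hb : 0 ≤ b) : radJ (closure (a • X + b • Y)) = a • radJ X + b • radJ Y := by
  ext f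
  rw [radJ_apply (rad_cbc hX hY a b), rad_sup_add hX hY ha hb]
  rw [lp.coeFn_add, lp.coeFn_smul, lp.coeFn_smul, Pi.add_apply, Pi.smul_apply, Pi.smul_apply,
    radJ_apply hX, radJ_apply hY, smul_eq_mul, smul_eq_mul]

theorem radJ_norm {X Y : Set E} (hX : IsCBC X) (hY : IsCBC Y) :
    ‖radJ X - radJ Y‖ = hdist X Y := by
  apply le_antisymm
  · apply lp.norm_le_of_forall_le
    · rw [rad_hdist hX hY]; exact hausdorffDist_nonneg
    · intro f
      have h1 := rad_sup_sub hX hY f.1 f.2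
      have h2 := rad_sup_sub hY hX f.1 f.2
      have h3 : excess X Y ≤ hdist X Y := le_max_left _ _
      have h4 : excess Y X ≤ hdist X Y := le_max_right _ _
      rw [lp.coeFn_sub, Pi.sub_apply, radJ_apply hX, radJ_apply hY, Real.norm_eq_abs, abs_le]
      constructor <;> linarith
  · have key : ∀ f : RadB E, |sSup (f.1 '' X) - sSup (f.1 '' Y)| ≤ ‖radJ X - radJ Y‖ := by
      intro f
      have := lp.norm_apply_le_norm ENNReal.top_ne_zero (radJ X - radJ Y) f
      rwa [lp.coeFn_sub, Pi.sub_apply, radJ_apply hX, radJ_apply hY, Real.norm_eq_abs] at this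
    apply max_le
    · exact rad_sep hX hY (norm_nonneg _) fun f hf => (abs_le.1 (key ⟨f, hf⟩)).2
    · exact rad_sep hY hX (norm_nonneg _) fun f hf => by
        have := (abs_le.1 (key ⟨f, hf⟩)).1
        simp only at this
        linarith

theorem radJ_edist {X Y : Set E} (hX : IsCBC X) (hY : IsCBC Y) :
    edist (radJ X) (radJ Y) = hausdorffEDist X Y := by
  rw [edist_dist, dist_eq_norm, radJ_norm hX hY, rad_hdist hX hY, hausdorffDist,
    ENNReal.ofReal_toReal (rad_fin hX hY)]

theorem rad_limit {X : ℕ → Set E} (hX : ∀ n, IsCBC (X n)) {L : Set E} (hL : IsClosed L)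
    (h : Tendsto (fun n => hausdorffEDist (X n) L) atTop (𝓝 0)) : IsCBC L := by
  have hev : ∀ ε : ℝ, 0 < ε → ∃ n, hausdorffEDist (X n) L < ENNReal.ofReal ε := fun ε hε =>
    (h.eventually (gt_mem_nhds (ENNReal.ofReal_pos.2 hε))).exists
  have h1 : ∀ ε : ℝ, 0 < ε → ∃ n, (∀ x ∈ X n, ∃ y ∈ L, dist x y < ε) ∧
      (∀ y ∈ L, ∃ x ∈ X n, dist y x < ε) := by
    intro ε hε
    obtain ⟨n, hn⟩ := hev ε hε
    refine ⟨n, fun x hx => ?_, fun y hy => ?_⟩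
    · obtain ⟨y, hy, hxy⟩ := exists_edist_lt_of_hausdorffEDist_lt hx hn
      exact ⟨y, hy, edist_lt_ofReal.1 hxy⟩
    · rw [hausdorffEDist_comm] at hn
      obtain ⟨x, hx, hxy⟩ := exists_edist_lt_of_hausdorffEDist_lt hy hn
      exact ⟨x, hx, edist_lt_ofReal.1 hxy⟩
  refine ⟨?_, hL, ?_, ?_⟩
  · obtain ⟨n, hn, -⟩ := h1 1 one_pos
    obtain ⟨x, hx⟩ := (hX n).1
    obtain ⟨y, hy, -⟩ := hn x hx
    exact ⟨y, hy⟩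
  · obtain ⟨n, -, hn⟩ := h1 1 one_pos
    refine ((hX n).2.2.1.thickening (δ := 1)).subset fun y hy => ?_
    exact mem_thickening_iff.2 (hn y hy)
  · intro x hx y hy a b ha hb hab
    rw [← hL.closure_eq, Metric.mem_closure_iff]
    intro ε hε
    obtain ⟨n, h2, h3⟩ := h1 (ε / 2) (by positivity)
    obtain ⟨x', hx', hxx⟩ := h3 x hx
    obtain ⟨y', hy', hyy⟩ := h3 y hy
    obtain ⟨z, hz, hzz⟩ := h2 _ ((hX n).2.2.2 hx' hy' ha hb hab)
    refine ⟨z, hz, ?_⟩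
    have h4 : dist (a • x + b • y) (a • x' + b • y') ≤ ε / 2 := by
      calc dist (a • x + b • y) (a • x' + b • y')
          ≤ dist (a • x) (a • x') + dist (b • y) (b • y') := dist_add_add_le _ _ _ _
        _ = a * dist x x' + b * dist y y' := by
          rw [dist_smul₀, dist_smul₀, Real.norm_of_nonneg ha, Real.norm_of_nonneg hb]
        _ ≤ a * (ε / 2) + b * (ε / 2) := by gcongr
        _ = ε / 2 := by rw [← add_mul, hab, one_mul]
    linarith [dist_triangle (a • x + b • y) (a • x' + b • y') z]

theorem rad_complete : IsComplete (radJ '' {A : Set E | IsCBC A}) := by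
  apply IsClosed.isComplete
  apply IsSeqClosed.isClosed
  intro x φ hx hφ
  choose X hX hXx using hx
  obtain rfl : (fun n => radJ (X n)) = x := funext hXx
  let C : ℕ → TopologicalSpace.Closeds E := fun n => ⟨X n, (hX n).2.1⟩
  have hC : CauchySeq C := by
    have h1 := hφ.cauchySeq
    rw [EMetric.cauchySeq_iff] at h1 ⊢
    intro ε hε
    obtain ⟨N, hN⟩ := h1 ε hε
    refine ⟨N, fun m hm n hn => ?_⟩
    have := hN m hm n hn
    rwa [radJ_edist (hX m) (hX n)] at this
  obtain ⟨L, hL⟩ := cauchySeq_tendsto_of_complete hC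
  rw [tendsto_iff_edist_tendsto_0] at hL
  have hLc : IsCBC (L : Set E) := rad_limit hX L.isClosed hL
  refine ⟨L, hLc, ?_⟩
  refine tendsto_nhds_unique ?_ hφ
  rw [tendsto_iff_edist_tendsto_0]
  simp only [radJ_edist (hX _) hLc]
  exact hL

/-- Proposition 6.4 (Rådström embedding): there exist a real Banach space `F` and a map
`J` defined on `ℭ_c(E)` such that (i) `J(λX +̇ μY) = λJ(X) + μJ(Y)` for `λ, μ ≥ 0`
(where `X +̇ Y` is the closure of the Minkowski sum); (ii) `‖J(X) − J(Y)‖ = h(X, Y)`;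
(iii) the image of `ℭ_c(E)` under `J` is a convex cone in `F` (stable under addition
and multiplication by nonnegative scalars), complete under the metric induced by the
norm of `F`. -/
theorem radstrom_embedding :
    ∃ (F : Type u) (_ : NormedAddCommGroup F) (_ : NormedSpace ℝ F)
      (_ : CompleteSpace F) (J : Set E → F),
      (∀ X Y : Set E, IsCBC X → IsCBC Y → ∀ lam mu : ℝ, 0 ≤ lam → 0 ≤ mu →
        J (closure (lam • X + mu • Y)) = lam • J X + mu • J Y) ∧
      (∀ X Y : Set E, IsCBC X → IsCBC Y → ‖J X - J Y‖ = hdist X Y) ∧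
      (∀ u v : F, u ∈ J '' {A | IsCBC A} → v ∈ J '' {A | IsCBC A} →
        u + v ∈ J '' {A | IsCBC A}) ∧
      (∀ c : ℝ, 0 ≤ c → ∀ u ∈ J '' {A | IsCBC A}, c • u ∈ J '' {A | IsCBC A}) ∧
      IsComplete (J '' {A | IsCBC A}) := by
  refine ⟨lp (fun _ : RadB E => ℝ) ⊤, inferInstance, inferInstance, inferInstance, radJ,
    fun X Y hX hY a b ha hb => radJ_add hX hY ha hb, fun X Y hX hY => radJ_norm hX hY,
    ?_, ?_, rad_complete⟩
  · rintro _ _ ⟨X, hX, rfl⟩ ⟨Y, hY, rfl⟩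
    exact ⟨_, rad_cbc hX hY 1 1, by
      rw [radJ_add hX hY zero_le_one zero_le_one, one_smul, one_smul]⟩
  · rintro c hc _ ⟨X, hX, rfl⟩
    exact ⟨_, rad_cbc hX hX c 0, by rw [radJ_add hX hX hc le_rfl]; simp⟩
end
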